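/- arXiv:1402.3842 — 3 statements merged into one kernel-verified Lean document; each statement's English description precedes it below -/
import Mathlib

section
/- For every natural number n, the number of permutations of length n avoiding both of the patterns 1324 and 3416725 equals the number of permutations of length n avoiding the pattern 1234. In other words, the set of patterns {1324, 3416725} is Wilf-equivalent to the pattern 1234. -/
/-- `π` contains the pattern `σ`: there is a strictly increasing choice of positions
on which `π` is order-isomorphic to `σ`. -/
def Contains {n k : ℕ} (π : Equiv.Perm (Fin n)) (σ : Equiv.Perm (Fin k)) : Prop :=
  ∃ f : Fin k → Fin n, StrictMono f ∧ ∀ a b : Fin k, σ a < σ b ↔ π (f a) < π (f b)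

/-- `π` avoids the pattern `σ`. -/
def Avoids {n k : ℕ} (π : Equiv.Perm (Fin n)) (σ : Equiv.Perm (Fin k)) : Prop :=
  ¬ Contains π σ
noncomputable def p1234 : Equiv.Perm (Fin 4) := Equiv.ofBijective ![0, 1, 2, 3] (by decide)
noncomputable def p1324 : Equiv.Perm (Fin 4) := Equiv.ofBijective ![0, 2, 1, 3] (by decide)
noncomputable def p3416725 : Equiv.Perm (Fin 7) := Equiv.ofBijective ![2, 3, 0, 5, 6, 1, 4] (by decide)

/-!
Call two permutations equivalent if they have the same left-to-right minima and the same
right-to-left maxima, and order permutations lexicographically by their inverses. Swapping the two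
middle entries of an occurrence of `1234` or `1324` (or rotating three entries of an occurrence of
`3416725`) keeps every moved entry strictly between a left-to-right minimum and a right-to-left
maximum, so it stays in the class, and it moves up or down the order. Conversely, comparing a
permutation with a larger (smaller) one in its class at the smallest value they place differently
exhibits an occurrence of `1234` (of `1324` or `3416725`). Hence the `1234`-avoiders are the
maxima of the classes and the `{1324, 3416725}`-avoiders their minima, one of each per class.
-/

open Equiv

section Frame

variable {α β : Type*} [Preorder α] [Preorder β] {f g : α → β} {p : α} {v : β}

/-- The graph of `f` has a point strictly to the left of and below `(p, v)`. -/
def HasLowerLeft (f : α → β) (p : α) (v : β) : Prop := ∃ i, i < p ∧ f i < v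

/-- The graph of `f` has a point strictly to the right of and above `(p, v)`; definitionally this
is `HasLowerLeft` for the dual orders. -/
def HasUpperRight (f : α → β) (p : α) (v : β) : Prop := ∃ i, p < i ∧ v < f i

/-- The graph of `f` has points strictly to the lower left and to the upper right of `(p, v)`. In
a permutation, the entries that are not interior are the left-to-right minima and the
right-to-left maxima. -/
def IsInterior (f : α → β) (p : α) (v : β) : Prop := HasLowerLeft f p v ∧ HasUpperRight f p v

/-- The left-to-right minima of `f`, as points of its graph. -/
def leftToRightMinima (f : α → β) : Set (α × β) :=
  {x | f x.1 = x.2 ∧ ¬ HasLowerLeft f x.1 x.2}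

/-- The right-to-left maxima of `f`, as points of its graph. -/
def rightToLeftMaxima (f : α → β) : Set (α × β) :=
  {x | f x.1 = x.2 ∧ ¬ HasUpperRight f x.1 x.2}

/-- The left-to-right minima and right-to-left maxima of `f`. This is the statistic that is equally
distributed over the two classes of permutations to be compared. -/
def frame (f : α → β) : Set (α × β) × Set (α × β) := (leftToRightMinima f, rightToLeftMaxima f)

lemma hasLowerLeft_iff_exists_mem_leftToRightMinima [WellFoundedLT α] :
    HasLowerLeft f p v ↔ ∃ x ∈ leftToRightMinima f, x.1 < p ∧ x.2 < v := by
  refine ⟨fun h => ?_, fun ⟨x, hx, hp, hv⟩ => ⟨x.1, hp, hx.1 ▸ hv⟩⟩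
  induction p using WellFoundedLT.induction generalizing v with
  | ind p ih =>
    obtain ⟨i, hip, hiv⟩ := h
    by_cases hi : HasLowerLeft f i (f i)
    · obtain ⟨x, hx, hxi, hxf⟩ := ih i hip hi
      exact ⟨x, hx, hxi.trans hip, hxf.trans hiv⟩
    · exact ⟨(i, f i), ⟨rfl, hi⟩, hip, hiv⟩

lemma hasLowerLeft_congr [WellFoundedLT α] (h : leftToRightMinima g = leftToRightMinima f) :
    HasLowerLeft g p v ↔ HasLowerLeft f p v := by
  rw [hasLowerLeft_iff_exists_mem_leftToRightMinima, h,
    hasLowerLeft_iff_exists_mem_leftToRightMinima]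

lemma hasLowerLeft_congr_of_forall_ne [WellFoundedLT α]
    (h : ∀ i, g i ≠ f i → HasLowerLeft f i (f i) ∧ HasLowerLeft f i (g i)) :
    HasLowerLeft g p v ↔ HasLowerLeft f p v := by
  constructor
  · rintro ⟨i, hip, hiv⟩
    by_cases hi : g i = f i
    · exact ⟨i, hip, hi ▸ hiv⟩
    · obtain ⟨j, hji, hjv⟩ := (h i hi).2
      exact ⟨j, hji.trans hip, hjv.trans hiv⟩
  · intro hf
    obtain ⟨⟨i, w⟩, ⟨hiw, hi⟩, hip, hiv⟩ := hasLowerLeft_iff_exists_mem_leftToRightMinima.1 hf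
    have hgi : g i = f i := by_contra fun hne => hi (hiw ▸ (h i hne).1)
    exact ⟨i, hip, (hgi.trans hiw) ▸ hiv⟩

lemma leftToRightMinima_eq_iff [WellFoundedLT α] :
    leftToRightMinima g = leftToRightMinima f ↔
      ∀ i, g i ≠ f i → HasLowerLeft f i (f i) ∧ HasLowerLeft f i (g i) := by
  constructor
  · refine fun h i hne => ⟨by_contra fun hf => ?_, by_contra fun hg => ?_⟩
    · have hmem : (i, f i) ∈ leftToRightMinima g := h ▸ ⟨rfl, hf⟩
      exact hne hmem.1
    · have hmem : (i, g i) ∈ leftToRightMinima f := h ▸ ⟨rfl, mt (hasLowerLeft_congr h).1 hg⟩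
      exact hne hmem.1.symm
  · intro h
    ext ⟨i, w⟩
    simp only [leftToRightMinima, Set.mem_ofPred_eq, hasLowerLeft_congr_of_forall_ne h]
    by_cases hi : g i = f i
    · rw [hi]
    · obtain ⟨hf, hg⟩ := h i hi
      constructor <;> rintro ⟨rfl, hw⟩ <;> contradiction

lemma rightToLeftMaxima_eq_iff [WellFoundedGT α] :
    rightToLeftMaxima g = rightToLeftMaxima f ↔
      ∀ i, g i ≠ f i → HasUpperRight f i (f i) ∧ HasUpperRight f i (g i) :=
  leftToRightMinima_eq_iff (α := αᵒᵈ) (β := βᵒᵈ)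

theorem frame_eq_frame_iff [WellFoundedLT α] [WellFoundedGT α] :
    frame g = frame f ↔ ∀ i, g i ≠ f i → IsInterior f i (f i) ∧ IsInterior f i (g i) := by
  simp only [frame, Prod.mk.injEq, leftToRightMinima_eq_iff, rightToLeftMaxima_eq_iff, IsInterior]
  grind

lemma frame_comp_swap [WellFoundedLT α] [WellFoundedGT α] [DecidableEq α] {a b c d : α}
    (hab : a < b) (hbc : b < c) (hcd : c < d) (hab' : f a < f b) (hac' : f a < f c)
    (hbd' : f b < f d) (hcd' : f c < f d) : frame (f ∘ swap b c) = frame f := by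
  refine frame_eq_frame_iff.2 fun i hi => ?_
  rcases eq_or_ne i b with rfl | hib
  · have hid : i < d := hbc.trans hcd
    simpa using ⟨⟨⟨a, hab, hab'⟩, ⟨d, hid, hbd'⟩⟩, ⟨⟨a, hab, hac'⟩, ⟨d, hid, hcd'⟩⟩⟩
  rcases eq_or_ne i c with rfl | hic
  · have hai : a < i := hab.trans hbc
    simpa using ⟨⟨⟨a, hai, hac'⟩, ⟨d, hcd, hcd'⟩⟩, ⟨⟨a, hai, hab'⟩, ⟨d, hcd, hbd'⟩⟩⟩
  · simp [swap_apply_of_ne_of_ne hib hic] at hi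

end Frame

section InverseLex

variable {α : Type*}

/-- The inverse of `π` as an element of the lexicographic order on functions: permutations are
compared by the position of the smallest value which they place differently. -/
def invLex (π : Perm α) : Lex (α → α) := toLex π.symm

lemma invLex_injective : Function.Injective (invLex (α := α)) := fun _ _ h =>
  symm_bijective.injective (DFunLike.coe_injective (toLex_inj.1 h))

variable [LinearOrder α] {π τ : Perm α}

lemma invLex_lt_invLex_iff :
    invLex τ < invLex π ↔ ∃ p q, p < q ∧ τ p = π q ∧ ∀ i, π i < π q → τ i = π i := by
  constructor
  · rintro ⟨v, heq, hlt⟩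
    refine ⟨τ.symm v, π.symm v, hlt, by simp, fun i hi => ?_⟩
    have hi' : τ.symm (π i) = π.symm (π i) := heq (π i) (by simpa using hi)
    rw [symm_apply_apply, symm_apply_eq] at hi'
    exact hi'.symm
  · rintro ⟨p, q, hpq, hp, heq⟩
    refine ⟨π q, fun v hv => ?_, ?_⟩
    · change τ.symm v = π.symm v
      rw [symm_apply_eq, heq _ (by simpa using hv), apply_symm_apply]
    · change τ.symm (π q) < π.symm (π q)
      rwa [← hp, symm_apply_apply, hp, symm_apply_apply]

lemma invLex_mul_swap_lt {b c : α} (hbc : b < c) (h : π c < π b) :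
    invLex (π * swap b c) < invLex π := by
  refine invLex_lt_invLex_iff.2 ⟨b, c, hbc, by simp, fun i hi => ?_⟩
  have hib : i ≠ b := by rintro rfl; exact hi.asymm h
  have hic : i ≠ c := by rintro rfl; exact hi.false
  rw [Perm.mul_apply, swap_apply_of_ne_of_ne hib hic]

lemma lt_invLex_mul_swap {b c : α} (hbc : b < c) (h : π b < π c) :
    invLex π < invLex (π * swap b c) := by
  simpa using invLex_mul_swap_lt (π := π * swap b c) hbc (by simpa using h)

end InverseLex

section PatternOccurrence

variable {n k : ℕ} {π : Perm (Fin n)}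

lemma contains_iff_of_leftInverse {σ : Perm (Fin k)} {ρ : Fin k → Fin k}
    (hρ : Function.LeftInverse ρ σ) :
    Contains π σ ↔ ∃ f : Fin k → Fin n, StrictMono f ∧ StrictMono fun j => π (f (ρ j)) := by
  have strictMono_iff (f : Fin k → Fin n) : (∀ a b, σ a < σ b ↔ π (f a) < π (f b)) ↔
      StrictMono fun j => π (f (ρ j)) := by
    refine ⟨fun h => ?_, fun h a b => ?_⟩
    · refine σ.surjective.forall.2 fun a => σ.surjective.forall.2 fun b hab => ?_
      simpa only [hρ a, hρ b] using (h a b).1 hab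
    · simpa only [hρ a, hρ b] using (h.lt_iff_lt (a := σ a) (b := σ b)).symm
  simp only [Contains, strictMono_iff]

lemma contains_p1234_iff_exists : Contains π p1234 ↔
    ∃ a b c d, (a < b ∧ b < c ∧ c < d) ∧ π a < π b ∧ π b < π c ∧ π c < π d := by
  have hρ : Function.LeftInverse ![0, 1, 2, 3] p1234 := by
    intro i; fin_cases i <;> rfl
  rw [contains_iff_of_leftInverse hρ]
  simp [Fin.strictMono_iff_lt_succ, Fin.forall_fin_succ, ← FinVec.exists_iff, FinVec.Exists]

lemma contains_p1324_iff_exists : Contains π p1324 ↔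
    ∃ a b c d, (a < b ∧ b < c ∧ c < d) ∧ π a < π c ∧ π c < π b ∧ π b < π d := by
  have hρ : Function.LeftInverse ![0, 2, 1, 3] p1324 := by
    intro i; fin_cases i <;> rfl
  rw [contains_iff_of_leftInverse hρ]
  simp [Fin.strictMono_iff_lt_succ, Fin.forall_fin_succ, ← FinVec.exists_iff, FinVec.Exists]

lemma contains_p3416725_iff_exists : Contains π p3416725 ↔
    ∃ a b c d e f g, (a < b ∧ b < c ∧ c < d ∧ d < e ∧ e < f ∧ f < g) ∧
      π c < π f ∧ π f < π a ∧ π a < π b ∧ π b < π g ∧ π g < π d ∧ π d < π e := by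
  have hρ : Function.LeftInverse ![2, 5, 0, 1, 6, 3, 4] p3416725 := by
    intro i; fin_cases i <;> rfl
  rw [contains_iff_of_leftInverse hρ]
  simp [Fin.strictMono_iff_lt_succ, Fin.forall_fin_succ, ← FinVec.exists_iff, FinVec.Exists]

end PatternOccurrence

section Moves

variable {n : ℕ} {π : Perm (Fin n)}

lemma exists_lt_invLex_of_contains_p1234 (h : Contains π p1234) :
    ∃ τ : Perm (Fin n), frame τ = frame π ∧ invLex π < invLex τ := by
  obtain ⟨a, b, c, d, ⟨hab, hbc, hcd⟩, hab', hbc', hcd'⟩ := contains_p1234_iff_exists.1 h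
  exact ⟨π * swap b c, frame_comp_swap hab hbc hcd hab' (hab'.trans hbc') (hbc'.trans hcd') hcd',
    lt_invLex_mul_swap hbc hbc'⟩

lemma exists_invLex_lt_of_contains_p1324 (h : Contains π p1324) :
    ∃ τ : Perm (Fin n), frame τ = frame π ∧ invLex τ < invLex π := by
  obtain ⟨a, b, c, d, ⟨hab, hbc, hcd⟩, hac', hcb', hbd'⟩ := contains_p1324_iff_exists.1 h
  exact ⟨π * swap b c, frame_comp_swap hab hbc hcd (hac'.trans hcb') hac' hbd' (hcb'.trans hbd'),
    invLex_mul_swap_lt hbc hcb'⟩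

lemma exists_invLex_lt_of_contains_p3416725 (h : Contains π p3416725) :
    ∃ τ : Perm (Fin n), frame τ = frame π ∧ invLex τ < invLex π := by
  obtain ⟨a, b, c, d, e, f, g, ⟨hab, hbc, hcd, hde, hef, hfg⟩,
    hcf', hfa', hab', hbg', hgd', hde'⟩ := contains_p3416725_iff_exists.1 h
  -- Rotating the entries playing `4`, `6`, `2` turns the occurrence of `3416725` into `3612745`.
  let τ := π * (swap b d * swap d f)
  have hτb : τ b = π d := by
    simp [τ, swap_apply_of_ne_of_ne (show b ≠ d by order) (show b ≠ f by order)]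
  have hτd : τ d = π f := by
    simp [τ, swap_apply_of_ne_of_ne (show f ≠ b by order) (show f ≠ d by order)]
  have hτf : τ f = π b := by simp [τ]
  have hτ_of_ne {i : Fin n} (hb : i ≠ b) (hd : i ≠ d) (hf : i ≠ f) : τ i = π i := by
    simp [τ, swap_apply_of_ne_of_ne hd hf, swap_apply_of_ne_of_ne hb hd]
  refine ⟨τ, frame_eq_frame_iff.2 fun i hi => ?_,
    invLex_lt_invLex_iff.2 ⟨d, f, by order, hτd, fun i hi => ?_⟩⟩
  · have hbdf : i = b ∨ i = d ∨ i = f := by grind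
    rcases hbdf with rfl | rfl | rfl
    · rw [hτb]
      constructor <;> exact ⟨⟨a, by order, by order⟩, ⟨e, by order, by order⟩⟩
    · rw [hτd]
      constructor <;> exact ⟨⟨c, by order, by order⟩, ⟨e, by order, by order⟩⟩
    · rw [hτf]
      constructor <;> exact ⟨⟨c, by order, by order⟩, ⟨g, by order, by order⟩⟩
  · apply hτ_of_ne <;> rintro rfl <;> order

end Moves

section Comparison

lemma exists_lt_le_apply_of_apply_lt {α : Type*} [LinearOrder α] [Finite α] {σ : Perm α} {q : α}
    (hq : σ q < q) : ∃ r < q, q ≤ σ r := by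
  by_contra! h
  have hmaps : Set.MapsTo σ.symm (Set.Iio q) (Set.Iio q) := Perm.perm_symm_mapsTo_of_mapsTo σ h
  simpa using hmaps hq

variable {n : ℕ} {π τ : Perm (Fin n)}

lemma contains_p1234_of_lt_invLex (hframe : frame τ = frame π) (hlt : invLex π < invLex τ) :
    Contains π p1234 := by
  obtain ⟨p, q, hpq, hv, heq⟩ := invLex_lt_invLex_iff.1 hlt
  have hp : τ p ≠ π p := fun h => hpq.ne (τ.injective (h.trans hv))
  have hq : τ q ≠ π q := fun h => hpq.ne (π.injective (hv.trans h))
  have heq' {i : Fin n} (hi : π i < τ q) : τ i = π i := by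
    obtain ⟨j, hj⟩ := τ.surjective (π i)
    obtain rfl : j = i := π.injective ((heq j (hj ▸ hi)).trans hj)
    exact hj
  have hpq' : π p < π q :=
    (not_lt.1 fun hqp => hq (heq' (hv ▸ hqp))).lt_of_ne (π.injective.ne hpq.ne)
  obtain ⟨⟨⟨a, ha, hav⟩, -⟩, -⟩ := frame_eq_frame_iff.1 hframe p hp
  obtain ⟨⟨-, ⟨d, hd, hdv⟩⟩, -⟩ := frame_eq_frame_iff.1 hframe q hq
  exact contains_p1234_iff_exists.2 ⟨a, p, q, d, ⟨ha, hpq, hd⟩, hav, hpq', hdv⟩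

-- In the positional order `b, r, a, p, e, q, g` the given entries form `3416725`: avoiding `1324`
-- supplies exactly the inequalities that are not assumed.
lemma contains_p3416725_of_avoids_p1324 (h1324 : Avoids π p1324) {a b e g p q r : Fin n}
    (hpq : p < q) (hqp : π q < π p) (hrq : r < q) (hqr : π q < π r)
    (hap : a < p) (haq : π a < π q) (hqg : q < g) (hrg : π r < π g)
    (hbr : b < r) (hbr' : π b < π r) (hpe : p < e) (hpe' : π p < π e) :
    Contains π p3416725 := by
  have lt_of_132 {i j k l : Fin n} (hij : i < j) (hjk : j < k) (hkl : k < l)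
      (hik : π i < π k) (hkj : π k < π j) : π l < π j := by
    have hjl : ¬ π j < π l := fun hjl' =>
      h1324 (contains_p1324_iff_exists.2 ⟨i, j, k, l, ⟨hij, hjk, hkl⟩, hik, hkj, hjl'⟩)
    exact (not_lt.1 hjl).lt_of_ne (π.injective.ne (hjk.trans hkl).ne')
  have hgp : π g < π p := lt_of_132 hap hpq hqg haq hqp
  have lt_of_lt_r {i : Fin n} (hi : i < r) : π q < π i := by
    have hiq : ¬ π i < π q := fun hiq' => (lt_of_132 hi hrq hqg hiq' hqr).asymm hrg
    exact (not_lt.1 hiq).lt_of_ne (π.injective.ne (hi.trans hrq).ne')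
  have hra : r < a := by
    rcases lt_trichotomy r a with h | rfl | h
    · exact h
    · exact absurd haq hqr.asymm
    · exact absurd haq (lt_of_lt_r h).asymm
  have heq : e < q := by
    rcases lt_trichotomy e q with h | rfl | h
    · exact h
    · exact absurd hpe' hqp.asymm
    · exact absurd hpe' (lt_of_132 hap hpq h haq hqp).asymm
  exact contains_p3416725_iff_exists.2 ⟨b, r, a, p, e, q, g, ⟨hbr, hra, hap, hpe, heq, hqg⟩,
    haq, lt_of_lt_r hbr, hbr', hrg, hgp, hpe'⟩

lemma contains_p1324_or_p3416725_of_invLex_lt (hframe : frame τ = frame π)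
    (hlt : invLex τ < invLex π) : Contains π p1324 ∨ Contains π p3416725 := by
  obtain ⟨p, q, hpq, hv, heq⟩ := invLex_lt_invLex_iff.1 hlt
  have interior := frame_eq_frame_iff.1 hframe
  have hp : τ p ≠ π p := fun h => hpq.ne (π.injective (h.symm.trans hv))
  -- The value `π q` moves left past position `q`, so some value must move right past it.
  obtain ⟨r, hrq, hqc⟩ : ∃ r < q, q ≤ τ.symm (π r) :=
    exists_lt_le_apply_of_apply_lt (σ := π.trans τ.symm) (by simpa [← hv] using hpq)
  obtain ⟨c, hc⟩ := τ.surjective (π r)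
  rw [← hc, symm_apply_apply] at hqc
  have hrc : r < c := hrq.trans_le hqc
  have hr : τ r ≠ π r := fun h => hrc.ne (τ.injective (h.trans hc.symm))
  have hc_ne : τ c ≠ π c := fun h => hrc.ne (π.injective (hc.symm.trans h))
  have lt_of_ne {i : Fin n} (hi : τ i ≠ π i) (hiq : i ≠ q) : π q < π i :=
    (not_lt.1 (mt (heq i) hi)).lt_of_ne (π.injective.ne hiq.symm)
  obtain ⟨⟨-, e, hpe, hpe'⟩, ⟨a, hap, hap'⟩, -⟩ := interior p hp
  obtain ⟨⟨⟨b, hbr, hbr'⟩, -⟩, -⟩ := interior r hr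
  obtain ⟨-, -, g, hcg, hcg'⟩ := interior c hc_ne
  exact or_iff_not_imp_left.2 fun h1324 => contains_p3416725_of_avoids_p1324 h1324 hpq
    (lt_of_ne hp hpq.ne) hrq (lt_of_ne hr hrq.ne) hap (hv ▸ hap') (hqc.trans_lt hcg) (hc ▸ hcg')
    hbr hbr' hpe hpe'

theorem avoids_p1234_iff_forall_invLex_le :
    Avoids π p1234 ↔ ∀ τ : Perm (Fin n), frame τ = frame π → invLex τ ≤ invLex π := by
  refine ⟨fun h τ hframe => not_lt.1 (mt (contains_p1234_of_lt_invLex hframe) h), fun h hc => ?_⟩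
  obtain ⟨τ, hframe, hlt⟩ := exists_lt_invLex_of_contains_p1234 hc
  exact (h τ hframe).not_gt hlt

theorem avoids_p1324_and_p3416725_iff_forall_le_invLex :
    Avoids π p1324 ∧ Avoids π p3416725 ↔
      ∀ τ : Perm (Fin n), frame τ = frame π → invLex π ≤ invLex τ := by
  rw [Avoids, Avoids, ← not_or]
  refine ⟨fun h τ hframe =>
    not_lt.1 (mt (contains_p1324_or_p3416725_of_invLex_lt hframe) h), fun h hc => ?_⟩
  obtain ⟨τ, hframe, hlt⟩ :=
    hc.elim exists_invLex_lt_of_contains_p1324 exists_invLex_lt_of_contains_p3416725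
  exact (h τ hframe).not_gt hlt

end Comparison

section MinimalInFibers

variable {α β γ : Type*} [Finite α] [LinearOrder γ] {φ : α → γ}

theorem card_minimal_in_fibers (key : α → β) (hφ : Function.Injective φ) :
    Nat.card {x // ∀ y, key y = key x → φ x ≤ φ y} = Nat.card (Set.range key) := by
  refine Nat.card_eq_of_bijective (fun x => Set.rangeFactorization key x.1) ⟨?_, ?_⟩
  · intro ⟨x, hx⟩ ⟨y, hy⟩ hxy
    have hkey : key x = key y := congrArg Subtype.val hxy
    exact Subtype.ext (hφ ((hx y hkey.symm).antisymm (hy x hkey)))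
  · rintro ⟨_, z, rfl⟩
    obtain ⟨x, hxz, hx⟩ :=
      Set.exists_min_image {y | key y = key z} φ (Set.toFinite _) ⟨z, rfl⟩
    exact ⟨⟨x, fun y hy => hx y (hy.trans hxz)⟩, Subtype.ext hxz⟩

theorem card_maximal_in_fibers (key : α → β) (hφ : Function.Injective φ) :
    Nat.card {x // ∀ y, key y = key x → φ y ≤ φ x} = Nat.card (Set.range key) :=
  card_minimal_in_fibers (γ := γᵒᵈ) key hφ

end MinimalInFibers

theorem wilf_equiv_1324_3416725_and_1234 (n : ℕ) :
    Nat.card {π : Equiv.Perm (Fin n) // Avoids π p1324 ∧ Avoids π p3416725} =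
      Nat.card {π : Equiv.Perm (Fin n) // Avoids π p1234} := by
  simp only [avoids_p1324_and_p3416725_iff_forall_le_invLex, avoids_p1234_iff_forall_invLex_le]
  rw [card_minimal_in_fibers (fun π : Perm (Fin n) => frame π) invLex_injective,
    card_maximal_in_fibers (fun π : Perm (Fin n) => frame π) invLex_injective]
end

section
/- For every natural number n, the number of involutions of length n avoiding both of the patterns 4231 and 5276143 equals the number of involutions of length n avoiding the pattern 4321. -/
noncomputable def p4321 : Equiv.Perm (Fin 4) := Equiv.ofBijective ![3, 2, 1, 0] (by decide)
noncomputable def p4231 : Equiv.Perm (Fin 4) := Equiv.ofBijective ![3, 1, 2, 0] (by decide)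
noncomputable def p5276143 : Equiv.Perm (Fin 7) := Equiv.ofBijective ![4, 1, 6, 5, 0, 3, 2] (by decide)

/-!
The two-cycles of an involution are the arcs, and its fixed points the isolated points, of an arc
diagram on a line. The involution contains 4321 exactly when an arc runs below another one. The
reverse-complement map commutes with inversion, fixes 4231 and sends 5276143 to 5472163, and an
involution avoids these two patterns exactly when its diagram has neither two non-nested arcs
or fixed points below a third arc nor a certain linked pair of nestings.

Build diagrams from left to right: each new point waits open for a partner, is fixed, or closes the
arc of an open point. Which closing steps keep 4321 away depends only on the number `h` of open
points; for the other two patterns it depends on one Boolean per open point, recording whether the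
arcs built so far separate it from the next open point. Let `M` be the Motzkin series and `X` the
length variable, and put `Y = X M` and `Z = Y / (1 + Y)`, so that `M = 1 + Y + Y²` and
`Z = X (1 + Y Z)`. Then `M Y ^ h`, respectively `M Y ^ (number of true labels) Z ^ (number of
labels)`, solve the transfer equations of the two processes. Without open points both are `M`, so
both classes of involutions are counted by the Motzkin numbers.
-/

section MotzkinSeries

open PowerSeries

/-- The Motzkin numbers `1, 1, 2, 4, 9, 21, …`, defined by their convolution recurrence. -/
def motzkin : ℕ → ℕ
  | 0 => 1
  | 1 => 1
  | n + 2 => motzkin (n + 1) + ∑ i : Fin (n + 1), motzkin i.1 * motzkin (n - i.1)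

/-- The generating function `M` of the Motzkin numbers. -/
noncomputable def motzkinSeries : ℚ⟦X⟧ := mk fun n => (motzkin n : ℚ)

/-- The series `Y = X M`, which accounts for one level of a Motzkin path together with the step
leaving that level. -/
noncomputable def levelSeries : ℚ⟦X⟧ := X * motzkinSeries

/-- The series `Z = Y / (1 + Y)`, the weight of an unmarked label in `labelWeight`. -/
noncomputable def labelSeries : ℚ⟦X⟧ := levelSeries * (1 + levelSeries)⁻¹

theorem constantCoeff_levelSeries : constantCoeff levelSeries = 0 := by
  simp [levelSeries]

theorem motzkinSeries_eq_one_add : motzkinSeries = 1 + levelSeries + levelSeries ^ 2 := by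
  have functional_equation :
      motzkinSeries = 1 + X * (motzkinSeries + X * (motzkinSeries * motzkinSeries)) := by
    ext n
    rcases n with _ | _ | n
    · simp [motzkinSeries, motzkin]
    · rw [map_add, coeff_succ_X_mul]
      simp [motzkinSeries, motzkin, coeff_one]
    · rw [map_add, coeff_succ_X_mul, map_add, coeff_succ_X_mul, coeff_mul,
        Finset.Nat.sum_antidiagonal_eq_sum_range_succ_mk]
      simp only [motzkinSeries, coeff_mk, motzkin, coeff_one, Finset.sum_range]
      push_cast
      simp
  rw [levelSeries]
  linear_combination functional_equation

theorem one_add_levelSeries_mul_labelSeries : (1 + levelSeries) * labelSeries = levelSeries := by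
  have inv_cancel : (1 + levelSeries) * (1 + levelSeries)⁻¹ = 1 :=
    PowerSeries.mul_inv_cancel _ (by simp [constantCoeff_levelSeries])
  rw [labelSeries]
  linear_combination levelSeries * inv_cancel

theorem labelSeries_eq_X_mul : labelSeries = X * (1 + levelSeries * labelSeries) := by
  have one_add_ne_zero : 1 + levelSeries ≠ 0 := fun h => by
    simpa [constantCoeff_levelSeries] using congrArg constantCoeff h
  apply mul_left_cancel₀ one_add_ne_zero
  have level_eq : levelSeries = X * motzkinSeries := rfl
  linear_combination (1 - X * levelSeries) * one_add_levelSeries_mul_labelSeries + level_eq +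
    X * motzkinSeries_eq_one_add

end MotzkinSeries

/-- A partial deterministic automaton over the alphabet `α` with states `S`. Words are lists whose
head is the letter read last. -/
structure PartialAutomaton (α S : Type*) where
  start : S
  Enabled : α → S → Prop
  next : α → S → S

namespace PartialAutomaton

variable {α S R : Type*} (A : PartialAutomaton α S)

/-- The state reached after reading a word, regardless of whether its letters were enabled. -/
def state : List α → S
  | [] => A.start
  | s :: w => A.next s (state w)

/-- Every letter of the word was enabled when it was read. -/
def Accepts : List α → Prop
  | [] => True
  | s :: w => Accepts w ∧ A.Enabled s (A.state w)

/-- The accepted words of length `l` that lead to the state `γ`. -/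
def words (l : ℕ) (γ : S) : Set (List α) :=
  {w | w.length = l ∧ A.Accepts w ∧ A.state w = γ}

/-- Reading the letter `s` in the state `β` is allowed and leads to the state `γ`. -/
def Transition (s : α) (β γ : S) : Prop :=
  A.Enabled s β ∧ A.next s β = γ

theorem words_zero_start : A.words 0 A.start = {[]} := by
  ext w
  simp only [words, List.length_eq_zero_iff, Set.mem_ofPred_eq, Set.mem_singleton_iff]
  exact ⟨And.left, by rintro rfl; exact ⟨rfl, trivial, rfl⟩⟩

theorem words_zero_of_ne {γ : S} (hγ : γ ≠ A.start) : A.words 0 γ = ∅ := by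
  refine Set.eq_empty_of_forall_notMem fun w => ?_
  rintro ⟨hlen, -, hstate⟩
  rw [List.length_eq_zero_iff.1 hlen] at hstate
  exact hγ hstate.symm

theorem words_succ {P : Finset (α × S)} {γ : S} (hP : ∀ s β, (s, β) ∈ P ↔ A.Transition s β γ)
    (l : ℕ) : A.words (l + 1) γ = ⋃ p ∈ P, List.cons p.1 '' A.words l p.2 := by
  ext w
  simp only [Set.mem_iUnion, Set.mem_image, exists_prop]
  constructor
  · rintro ⟨hlen, hacc, hstate⟩
    cases w with
    | nil => simp at hlen
    | cons s w =>
      exact ⟨(s, A.state w), (hP _ _).2 ⟨hacc.2, hstate⟩, w,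
        ⟨Nat.succ_injective hlen, hacc.1, rfl⟩, rfl⟩
  · rintro ⟨⟨s, β⟩, hp, w, ⟨hlen, hacc, rfl⟩, rfl⟩
    obtain ⟨henabled, hnext⟩ := (hP _ _).1 hp
    exact ⟨congrArg (· + 1) hlen, ⟨hacc, henabled⟩, hnext⟩

theorem disjoint_cons_image_words {p q : α × S} (hpq : p ≠ q) (l : ℕ) :
    Disjoint (List.cons p.1 '' A.words l p.2) (List.cons q.1 '' A.words l q.2) := by
  rw [Set.disjoint_left]
  rintro _ ⟨w, hw, rfl⟩ ⟨w', hw', heq⟩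
  obtain ⟨hletter, rfl⟩ := List.cons.inj heq
  exact hpq (Prod.ext hletter.symm (hw.2.2.symm.trans hw'.2.2))

open PowerSeries in
/-- The state `γ` has finitely many incoming transitions, and the weights of their sources give the
weight of `γ` as they would if `wt` were the generating function of the accepted words. -/
def TransferEquation [DecidableEq S] [Semiring R] (wt : S → R⟦X⟧) (γ : S) : Prop :=
  ∃ P : Finset (α × S), (∀ s β, (s, β) ∈ P ↔ A.Transition s β γ) ∧
    wt γ = (if γ = A.start then 1 else 0) + X * ∑ p ∈ P, wt p.2

open PowerSeries in
theorem ncard_words [DecidableEq S] [Semiring R] {wt : S → R⟦X⟧}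
    (hwt : ∀ γ, A.TransferEquation wt γ) (l : ℕ) (γ : S) :
    (A.words l γ).Finite ∧ ((A.words l γ).ncard : R) = coeff l (wt γ) := by
  induction l generalizing γ with
  | zero =>
    obtain ⟨P, -, hγ⟩ := hwt γ
    rw [hγ, map_add, coeff_zero_X_mul, add_zero]
    by_cases h : γ = A.start
    · simp [h, words_zero_start]
    · simp [h, words_zero_of_ne]
  | succ l ih =>
    obtain ⟨P, hP, hγ⟩ := hwt γ
    have finite_image : ∀ p ∈ P, (List.cons p.1 '' A.words l p.2).Finite := fun p _ =>
      (ih p.2).1.image _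
    have pairwise_disjoint :
        (P : Set (α × S)).PairwiseDisjoint fun p => List.cons p.1 '' A.words l p.2 :=
      fun p _ q _ hpq => A.disjoint_cons_image_words hpq l
    rw [A.words_succ hP]
    refine ⟨P.finite_toSet.biUnion finite_image, ?_⟩
    have coeff_start : coeff (l + 1) (if γ = A.start then (1 : R⟦X⟧) else 0) = 0 := by
      split_ifs <;> simp [coeff_one]
    rw [hγ, map_add, coeff_start, zero_add, coeff_succ_X_mul, map_sum]
    have card_union : (⋃ p ∈ P, List.cons p.1 '' A.words l p.2).ncard =
        ∑ p ∈ P, (A.words l p.2).ncard := by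
      have card_biUnion := P.finite_toSet.ncard_biUnion finite_image pairwise_disjoint
      rw [finsum_mem_coe_finset] at card_biUnion
      simpa only [Finset.mem_coe, Set.ncard_image_of_injective _ List.cons_injective] using
        card_biUnion
    rw [card_union, Nat.cast_sum]
    exact Finset.sum_congr rfl fun p _ => (ih p.2).2

end PartialAutomaton

/-- A partially built arc diagram on the points `0, 1, 2, …`: arcs `x ≤ y`, where `x = y` encodes a
fixed point, and open points, which will be joined to points that are still to come. -/
@[ext]
structure ArcDiagram where
  Arc : ℕ → ℕ → Prop
  Open : ℕ → Prop

namespace ArcDiagram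

variable {D : ArcDiagram} {l o : ℕ}

/-- The diagram is built on the points below `l`, and its open points lie on no arc. -/
structure WellFormed (D : ArcDiagram) (l : ℕ) : Prop where
  arc_le : ∀ {x y}, D.Arc x y → x ≤ y
  arc_lt : ∀ {x y}, D.Arc x y → y < l
  open_lt : ∀ {x}, D.Open x → x < l
  left_not_open : ∀ {x y}, D.Arc x y → ¬ D.Open x
  right_not_open : ∀ {x y}, D.Arc x y → ¬ D.Open y

/-- The diagram without points. -/
def empty : ArcDiagram where
  Arc _ _ := False
  Open _ := False

/-- Add the new open point `l`. -/
def addOpener (D : ArcDiagram) (l : ℕ) : ArcDiagram where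
  Arc := D.Arc
  Open x := D.Open x ∨ x = l

/-- Add the new point `l` and join it to the open point `o`; `o = l` adds a fixed point. -/
def addArc (D : ArcDiagram) (o l : ℕ) : ArcDiagram where
  Arc x y := D.Arc x y ∨ x = o ∧ y = l
  Open x := D.Open x ∧ x ≠ o

/-- An arc starts at `a` and ends, now or later, to the right of `y`. -/
def ExtendsPast (D : ArcDiagram) (a y : ℕ) : Prop :=
  D.Open a ∨ ∃ b, D.Arc a b ∧ y < b

/-- Some arc runs below another one. -/
def HasNestedArcs (D : ArcDiagram) : Prop :=
  ∃ a x y, a < x ∧ x < y ∧ D.Arc x y ∧ D.ExtendsPast a y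

/-- Two arcs or fixed points, the second one starting and ending further to the right than the
first one, run below a third arc. -/
def HasCoveredPair (D : ArcDiagram) : Prop :=
  ∃ o x y u z, o < x ∧ x < u ∧ y < z ∧ D.Arc x y ∧ D.Arc u z ∧ D.ExtendsPast o z

/-- Two nestings, `(x, y)` below an arc from `a` and `(u, z)` below an arc from `c`, are linked by
`x < c < y < u`. -/
def HasLinkedNestings (D : ArcDiagram) : Prop :=
  ∃ a x c y u z, a < x ∧ x < c ∧ c < y ∧ y < u ∧
    D.Arc x y ∧ D.ExtendsPast a y ∧ D.Arc u z ∧ D.ExtendsPast c z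

/-- The diagram has neither a covered pair nor linked nestings. -/
def IsAdmissible (D : ArcDiagram) : Prop :=
  ¬ D.HasCoveredPair ∧ ¬ D.HasLinkedNestings

/-- The arcs to the left of `o'` forbid an arc from `o'` to the next point while `o` is open. -/
def Separated (D : ArcDiagram) (o o' : ℕ) : Prop :=
  ∃ x y, D.Arc x y ∧
    (o < x ∧ x < o' ∨ x < o ∧ o < y ∧ y < o' ∧ ∃ a, a < x ∧ D.ExtendsPast a y)

theorem wellFormed_empty : empty.WellFormed 0 := by
  constructor <;> simp [empty]

theorem WellFormed.addOpener (hD : D.WellFormed l) : (D.addOpener l).WellFormed (l + 1) where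
  arc_le h := hD.arc_le h
  arc_lt h := (hD.arc_lt h).trans l.lt_succ_self
  open_lt h := h.elim (fun h => (hD.open_lt h).trans l.lt_succ_self) (by omega)
  left_not_open h := not_or.2 ⟨hD.left_not_open h, ((hD.arc_le h).trans_lt (hD.arc_lt h)).ne⟩
  right_not_open h := not_or.2 ⟨hD.right_not_open h, (hD.arc_lt h).ne⟩

theorem WellFormed.le_of_eq_or_open (hD : D.WellFormed l) (ho : o = l ∨ D.Open o) : o ≤ l :=
  ho.elim le_of_eq fun h => (hD.open_lt h).le

theorem WellFormed.addArc (hD : D.WellFormed l) (ho : o = l ∨ D.Open o) :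
    (D.addArc o l).WellFormed (l + 1) := by
  have hol := hD.le_of_eq_or_open ho
  constructor
  · rintro x y (h | ⟨rfl, rfl⟩)
    exacts [hD.arc_le h, hol]
  · rintro x y (h | ⟨rfl, rfl⟩)
    exacts [(hD.arc_lt h).trans (Nat.lt_succ_self _), Nat.lt_succ_self _]
  · exact fun h => (hD.open_lt h.1).trans l.lt_succ_self
  · rintro x y (h | ⟨rfl, rfl⟩) hx
    exacts [hD.left_not_open h hx.1, hx.2 rfl]
  · rintro x y (h | ⟨rfl, rfl⟩) hy
    exacts [hD.right_not_open h hy.1, (hD.open_lt hy.1).false]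

theorem WellFormed.extendsPast_addArc (hD : D.WellFormed l) (ho : o = l ∨ D.Open o) {a y : ℕ}
    (ha : a < l) (hy : y < l) : (D.addArc o l).ExtendsPast a y ↔ D.ExtendsPast a y := by
  rw [ExtendsPast, ExtendsPast]
  constructor
  · rintro (hopen | ⟨b, harc | ⟨rfl, rfl⟩, hyb⟩)
    · exact .inl hopen.1
    · exact .inr ⟨b, harc, hyb⟩
    · exact .inl (ho.resolve_left ha.ne)
  · rintro (hopen | ⟨b, harc, hyb⟩)
    · by_cases hao : a = o
      · exact .inr ⟨l, .inr ⟨hao, rfl⟩, hy⟩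
      · exact .inl ⟨hopen, hao⟩
    · exact .inr ⟨b, .inl harc, hyb⟩

theorem WellFormed.extendsPast_addArc_self (hD : D.WellFormed l) {a : ℕ} :
    (D.addArc o l).ExtendsPast a l ↔ D.Open a ∧ a ≠ o := by
  have := @hD.arc_lt a
  simp only [ExtendsPast, ArcDiagram.addArc]
  grind

theorem extendsPast_addOpener {a y : ℕ} (ha : a < l) :
    (D.addOpener l).ExtendsPast a y ↔ D.ExtendsPast a y := by
  simp only [ExtendsPast, addOpener, ha.ne, or_false]

theorem WellFormed.hasNestedArcs_addArc (hD : D.WellFormed l) (ho : o = l ∨ D.Open o) :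
    (D.addArc o l).HasNestedArcs ↔ D.HasNestedArcs ∨ o ≠ l ∧ ∃ o₁ < o, D.Open o₁ := by
  have hol := hD.le_of_eq_or_open ho
  constructor
  · rintro ⟨a, x, y, hax, hxy, harc | ⟨rfl, rfl⟩, hext⟩
    · have hy := hD.arc_lt harc
      exact .inl ⟨a, x, y, hax, hxy, harc, (hD.extendsPast_addArc ho (by omega) hy).1 hext⟩
    · exact .inr ⟨hxy.ne, a, hax, (hD.extendsPast_addArc_self.1 hext).1⟩
  · rintro (⟨a, x, y, hax, hxy, harc, hext⟩ | ⟨hne, o₁, ho₁, hopen⟩)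
    · have hy := hD.arc_lt harc
      exact ⟨a, x, y, hax, hxy, .inl harc, (hD.extendsPast_addArc ho (by omega) hy).2 hext⟩
    · exact ⟨o₁, o, l, ho₁, by omega, .inr ⟨rfl, rfl⟩, hD.extendsPast_addArc_self.2 ⟨hopen, ho₁.ne⟩⟩

theorem WellFormed.hasCoveredPair_addArc (hD : D.WellFormed l) (ho : o = l ∨ D.Open o) :
    (D.addArc o l).HasCoveredPair ↔
      D.HasCoveredPair ∨ ∃ o₁ x y, D.Open o₁ ∧ o₁ < x ∧ x < o ∧ D.Arc x y := by
  have hol := hD.le_of_eq_or_open ho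
  constructor
  · rintro ⟨a, x, y, u, z, hax, hxu, hyz, harc | ⟨rfl, rfl⟩, harc' | ⟨rfl, rfl⟩, hext⟩
    · have hz := hD.arc_lt harc'
      have huz := hD.arc_le harc'
      exact .inl ⟨a, x, y, u, z, hax, hxu, hyz, harc, harc',
        (hD.extendsPast_addArc ho (by omega) hz).1 hext⟩
    · exact .inr ⟨a, x, y, (hD.extendsPast_addArc_self.1 hext).1, hax, hxu, harc⟩
    · have hz := hD.arc_lt harc'
      omega
    · omega
  · rintro (⟨a, x, y, u, z, hax, hxu, hyz, harc, harc', hext⟩ | ⟨a, x, y, hopen, hax, hxo, harc⟩)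
    · have hz := hD.arc_lt harc'
      have huz := hD.arc_le harc'
      exact ⟨a, x, y, u, z, hax, hxu, hyz, .inl harc, .inl harc',
        (hD.extendsPast_addArc ho (by omega) hz).2 hext⟩
    · exact ⟨a, x, y, o, l, hax, hxo, hD.arc_lt harc, .inl harc, .inr ⟨rfl, rfl⟩,
        hD.extendsPast_addArc_self.2 ⟨hopen, by omega⟩⟩

theorem WellFormed.hasLinkedNestings_addArc (hD : D.WellFormed l) (ho : o = l ∨ D.Open o) :
    (D.addArc o l).HasLinkedNestings ↔ D.HasLinkedNestings ∨
      ∃ a x c y, a < x ∧ x < c ∧ c < y ∧ y < o ∧ D.Arc x y ∧ D.ExtendsPast a y ∧ D.Open c := by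
  have hol := hD.le_of_eq_or_open ho
  constructor
  · rintro ⟨a, x, c, y, u, z, hax, hxc, hcy, hyu, harc | ⟨rfl, rfl⟩, hext,
      harc' | ⟨rfl, rfl⟩, hext'⟩
    · have hy := hD.arc_lt harc
      have hz := hD.arc_lt harc'
      exact .inl ⟨a, x, c, y, u, z, hax, hxc, hcy, hyu, harc,
        (hD.extendsPast_addArc ho (by omega) hy).1 hext, harc',
        (hD.extendsPast_addArc ho (by omega) hz).1 hext'⟩
    · have hy := hD.arc_lt harc
      exact .inr ⟨a, x, c, y, hax, hxc, hcy, hyu, harc,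
        (hD.extendsPast_addArc ho (by omega) hy).1 hext, (hD.extendsPast_addArc_self.1 hext').1⟩
    · have hz := hD.arc_lt harc'
      have huz := hD.arc_le harc'
      omega
    · omega
  · rintro (⟨a, x, c, y, u, z, hax, hxc, hcy, hyu, harc, hext, harc', hext'⟩ |
      ⟨a, x, c, y, hax, hxc, hcy, hyo, harc, hext, hopen⟩)
    · have hy := hD.arc_lt harc
      have hz := hD.arc_lt harc'
      exact ⟨a, x, c, y, u, z, hax, hxc, hcy, hyu, .inl harc,
        (hD.extendsPast_addArc ho (by omega) hy).2 hext, .inl harc',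
        (hD.extendsPast_addArc ho (by omega) hz).2 hext'⟩
    · have hy := hD.arc_lt harc
      exact ⟨a, x, c, y, o, l, hax, hxc, hcy, hyo, .inl harc,
        (hD.extendsPast_addArc ho (by omega) hy).2 hext, .inr ⟨rfl, rfl⟩,
        hD.extendsPast_addArc_self.2 ⟨hopen, by omega⟩⟩

theorem WellFormed.isAdmissible_addArc (hD : D.WellFormed l) (ho : o = l ∨ D.Open o) :
    (D.addArc o l).IsAdmissible ↔
      D.IsAdmissible ∧ ∀ o₁ < o, D.Open o₁ → ¬ D.Separated o₁ o := by
  simp only [IsAdmissible, hD.hasCoveredPair_addArc ho, hD.hasLinkedNestings_addArc ho, not_or]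
  constructor
  · rintro ⟨⟨hcovered, hcovered'⟩, hlinked, hlinked'⟩
    refine ⟨⟨hcovered, hlinked⟩, ?_⟩
    rintro o₁ - hopen ⟨x, y, harc, ⟨hx, hxo⟩ | ⟨hx, hy, hyo, a, hax, hext⟩⟩
    exacts [hcovered' ⟨o₁, x, y, hopen, hx, hxo, harc⟩,
      hlinked' ⟨a, x, o₁, y, hax, hx, hy, hyo, harc, hext, hopen⟩]
  · rintro ⟨⟨hcovered, hlinked⟩, hsep⟩
    refine ⟨⟨hcovered, ?_⟩, hlinked, ?_⟩
    · rintro ⟨o₁, x, y, hopen, hx, hxo, harc⟩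
      exact hsep o₁ (hx.trans hxo) hopen ⟨x, y, harc, .inl ⟨hx, hxo⟩⟩
    · rintro ⟨a, x, c, y, hax, hxc, hcy, hyo, harc, hext, hopen⟩
      exact hsep c (hcy.trans hyo) hopen ⟨x, y, harc, .inr ⟨hxc, hcy, hyo, a, hax, hext⟩⟩

theorem WellFormed.hasNestedArcs_addOpener (hD : D.WellFormed l) :
    (D.addOpener l).HasNestedArcs ↔ D.HasNestedArcs := by
  constructor <;> rintro ⟨a, x, y, hax, hxy, harc, hext⟩ <;>
    have hy := hD.arc_lt harc <;> have hal : a < l := by omega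
  · exact ⟨a, x, y, hax, hxy, harc, (extendsPast_addOpener hal).1 hext⟩
  · exact ⟨a, x, y, hax, hxy, harc, (extendsPast_addOpener hal).2 hext⟩

theorem WellFormed.hasCoveredPair_addOpener (hD : D.WellFormed l) :
    (D.addOpener l).HasCoveredPair ↔ D.HasCoveredPair := by
  constructor <;> rintro ⟨o, x, y, u, z, hox, hxu, hyz, harc, harc', hext⟩ <;>
    have hz := hD.arc_lt harc' <;> have huz := hD.arc_le harc' <;> have hol : o < l := by omega
  · exact ⟨o, x, y, u, z, hox, hxu, hyz, harc, harc', (extendsPast_addOpener hol).1 hext⟩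
  · exact ⟨o, x, y, u, z, hox, hxu, hyz, harc, harc', (extendsPast_addOpener hol).2 hext⟩

theorem WellFormed.hasLinkedNestings_addOpener (hD : D.WellFormed l) :
    (D.addOpener l).HasLinkedNestings ↔ D.HasLinkedNestings := by
  constructor <;> rintro ⟨a, x, c, y, u, z, hax, hxc, hcy, hyu, harc, hext, harc', hext'⟩ <;>
    have hy := hD.arc_lt harc <;> have hal : a < l := (by omega) <;>
    have hcl : c < l := (by omega)
  · exact ⟨a, x, c, y, u, z, hax, hxc, hcy, hyu, harc, (extendsPast_addOpener hal).1 hext, harc',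
      (extendsPast_addOpener hcl).1 hext'⟩
  · exact ⟨a, x, c, y, u, z, hax, hxc, hcy, hyu, harc, (extendsPast_addOpener hal).2 hext, harc',
      (extendsPast_addOpener hcl).2 hext'⟩

theorem WellFormed.isAdmissible_addOpener (hD : D.WellFormed l) :
    (D.addOpener l).IsAdmissible ↔ D.IsAdmissible := by
  rw [IsAdmissible, IsAdmissible, hD.hasCoveredPair_addOpener, hD.hasLinkedNestings_addOpener]

theorem WellFormed.separated_addOpener (hD : D.WellFormed l) {a b : ℕ} :
    (D.addOpener l).Separated a b ↔ D.Separated a b := by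
  constructor <;> rintro ⟨x, y, harc, ⟨hax, hxb⟩ | ⟨hxa, hay, hyb, c, hcx, hext⟩⟩
  · exact ⟨x, y, harc, .inl ⟨hax, hxb⟩⟩
  · have hy := hD.arc_lt harc
    exact ⟨x, y, harc, .inr ⟨hxa, hay, hyb, c, hcx, (extendsPast_addOpener (by omega)).1 hext⟩⟩
  · exact ⟨x, y, harc, .inl ⟨hax, hxb⟩⟩
  · have hy := hD.arc_lt harc
    exact ⟨x, y, harc, .inr ⟨hxa, hay, hyb, c, hcx, (extendsPast_addOpener (by omega)).2 hext⟩⟩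

theorem WellFormed.separated_succ (hD : D.WellFormed l) {a : ℕ} :
    D.Separated a (l + 1) ↔ D.Separated a l := by
  have arc_lt_iff {x y : ℕ} (harc : D.Arc x y) : (x < l + 1 ↔ x < l) ∧ (y < l + 1 ↔ y < l) := by
    have := hD.arc_le harc
    have := hD.arc_lt harc
    omega
  refine exists₂_congr fun x y => and_congr_right fun harc => ?_
  rw [(arc_lt_iff harc).1, (arc_lt_iff harc).2]

theorem WellFormed.not_separated_of_le (hD : D.WellFormed l) {a b : ℕ} (ha : l ≤ a) :
    ¬ D.Separated a b := by
  rintro ⟨x, y, harc, h⟩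
  have := hD.arc_le harc
  have := hD.arc_lt harc
  omega

theorem WellFormed.separated_addArc (hD : D.WellFormed l) (ho : o = l ∨ D.Open o) {a b : ℕ}
    (hb : b ≤ l + 1) : (D.addArc o l).Separated a b ↔
      D.Separated a b ∨ (a < o ∧ o < b) ∨ o < a ∧ a < l ∧ l < b ∧ ∃ a' < o, D.Open a' := by
  have hol := hD.le_of_eq_or_open ho
  constructor
  · rintro ⟨x, y, harc | ⟨rfl, rfl⟩, h | ⟨hxa, hay, hyb, c, hcx, hext⟩⟩
    · exact .inl ⟨x, y, harc, .inl h⟩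
    · have hy := hD.arc_lt harc
      exact .inl ⟨x, y, harc, .inr ⟨hxa, hay, hyb, c, hcx,
        (hD.extendsPast_addArc ho (by omega) hy).1 hext⟩⟩
    · exact .inr (.inl h)
    · exact .inr (.inr ⟨hxa, hay, hyb, c, hcx, (hD.extendsPast_addArc_self.1 hext).1⟩)
  · rintro (⟨x, y, harc, h | ⟨hxa, hay, hyb, c, hcx, hext⟩⟩ | h | ⟨hoa, hal, hlb, c, hco, hopen⟩)
    · exact ⟨x, y, .inl harc, .inl h⟩
    · have hy := hD.arc_lt harc
      exact ⟨x, y, .inl harc, .inr ⟨hxa, hay, hyb, c, hcx,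
        (hD.extendsPast_addArc ho (by omega) hy).2 hext⟩⟩
    · exact ⟨o, l, .inr ⟨rfl, rfl⟩, .inl h⟩
    · exact ⟨o, l, .inr ⟨rfl, rfl⟩, .inr ⟨hoa, hal, hlb, c, hco,
        hD.extendsPast_addArc_self.2 ⟨hopen, hco.ne⟩⟩⟩

theorem WellFormed.separated_iff_or (hD : D.WellFormed l) {a b c : ℕ} (ha : D.Open a)
    (hb : D.Open b) (hab : a < b) (hbc : b < c) :
    D.Separated a c ↔ D.Separated a b ∨ D.Separated b c := by
  have ne_of_arc {x y : ℕ} (harc : D.Arc x y) : x ≠ a ∧ x ≠ b ∧ y ≠ b :=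
    ⟨fun h => hD.left_not_open harc (h ▸ ha), fun h => hD.left_not_open harc (h ▸ hb),
      fun h => hD.right_not_open harc (h ▸ hb)⟩
  simp only [Separated, ← exists_or, ← and_or_left]
  refine exists₂_congr fun x y => and_congr_right fun harc => ?_
  obtain ⟨hxa, hxb, hyb⟩ := ne_of_arc harc
  have hxy := hD.arc_le harc
  by_cases hext : ∃ d < x, D.ExtendsPast d y <;> simp only [hext, and_true, and_false] <;> grind

end ArcDiagram

/-- The labels after the last label has been set to `true`. -/
def markLast (β : List Bool) : List Bool :=
  β.modifyLast fun _ => true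

theorem markLast_nil : markLast [] = [] :=
  rfl

theorem markLast_concat (β : List Bool) (b : Bool) : markLast (β ++ [b]) = β ++ [true] :=
  List.modifyLast_concat _ b β

namespace ArcDiagram

variable {D D' : ArcDiagram} {l o e : ℕ} {p q : List ℕ}

open Classical in
/-- The truth value of `D.Separated a b`. -/
noncomputable def separationLabel (D : ArcDiagram) (a b : ℕ) : Bool :=
  decide (D.Separated a b)

/-- For a list of open points followed by the point `e`, the labels recording which open points
are separated from the next point of the list. -/
noncomputable def gapLabels (D : ArcDiagram) : List ℕ → ℕ → List Bool
  | [], _ => []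
  | o :: os, e => D.separationLabel o (os.headD e) :: gapLabels D os e

theorem separationLabel_eq_true {a b : ℕ} : D.separationLabel a b = true ↔ D.Separated a b :=
  @decide_eq_true_iff _ (_)

theorem separationLabel_eq_false {a b : ℕ} :
    D.separationLabel a b = false ↔ ¬ D.Separated a b :=
  @decide_eq_false_iff_not _ (_)

theorem separationLabel_congr {a b b' : ℕ} (h : D.Separated a b ↔ D'.Separated a b') :
    D.separationLabel a b = D'.separationLabel a b' :=
  decide_eq_decide.2 h

theorem length_gapLabels : (D.gapLabels p e).length = p.length := by
  induction p with
  | nil => rfl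
  | cons _ p ih => exact congrArg (· + 1) ih

theorem gapLabels_append :
    D.gapLabels (p ++ q) e = D.gapLabels p (q.headD e) ++ D.gapLabels q e := by
  induction p with
  | nil => rfl
  | cons o p ih => cases p <;> simp_all [gapLabels]

theorem take_gapLabels (p : List ℕ) (e k : ℕ) :
    (D.gapLabels p e).take k = D.gapLabels (p.take k) ((p.drop k).headD e) := by
  induction p generalizing k with
  | nil => simp [gapLabels]
  | cons o p ih => rcases k with _ | _ | k <;> cases p <;> simp_all [gapLabels]

theorem drop_gapLabels (p : List ℕ) (e k : ℕ) :
    (D.gapLabels p e).drop k = D.gapLabels (p.drop k) e := by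
  induction p generalizing k with
  | nil => simp [gapLabels]
  | cons o p ih => cases k <;> simp_all [gapLabels]

theorem gapLabels_concat (p : List ℕ) (a e : ℕ) :
    D.gapLabels (p ++ [a]) e = D.gapLabels p a ++ [D.separationLabel a e] :=
  gapLabels_append

theorem gapLabels_congr {e' : ℕ} (hp : ∀ a ∈ p, ∀ b ∈ p, D.Separated a b ↔ D'.Separated a b)
    (he : ∀ a ∈ p, D.Separated a e ↔ D'.Separated a e') :
    D.gapLabels p e = D'.gapLabels p e' := by
  induction p with
  | nil => rfl
  | cons a p ih =>
    have tail_eq := ih (fun b hb c hc => hp b (.tail _ hb) c (.tail _ hc))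
      fun b hb => he b (.tail _ hb)
    rw [gapLabels, gapLabels, tail_eq]
    cases p with
    | nil => exact congrArg (· :: _) (separationLabel_congr (he a (.head _)))
    | cons b p => exact congrArg (· :: _) (separationLabel_congr (hp a (.head _) b (by simp)))

theorem WellFormed.true_notMem_gapLabels (hD : D.WellFormed l) (hopen : ∀ a ∈ p, D.Open a)
    (hsorted : p.Pairwise (· < ·)) (hlt : ∀ a ∈ p, a < e) :
    true ∉ D.gapLabels p e ↔ ∀ a ∈ p, ¬ D.Separated a e := by
  induction p with
  | nil => simp [gapLabels]
  | cons a p ih =>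
    have ih := ih (fun b hb => hopen b (.tail _ hb)) hsorted.of_cons fun b hb => hlt b (.tail _ hb)
    cases p with
    | nil => simp [gapLabels, separationLabel_eq_false]
    | cons b p =>
      have separated_a := hD.separated_iff_or (hopen a (.head _)) (hopen b (by simp))
        (List.rel_of_pairwise_cons hsorted (.head _)) (hlt b (by simp))
      rw [gapLabels, List.mem_cons, not_or, ih]
      simp [separated_a, separationLabel_eq_false]
      tauto

theorem WellFormed.gapLabels_addOpener (hD : D.WellFormed l) :
    (D.addOpener l).gapLabels (p ++ [l]) (l + 1) = D.gapLabels p l ++ [false] := by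
  have last_label : ¬ (D.addOpener l).Separated l (l + 1) := fun h =>
    hD.not_separated_of_le le_rfl (hD.separated_addOpener.1 h)
  rw [gapLabels_concat, separationLabel_eq_false.2 last_label]
  exact congrArg (· ++ _) (gapLabels_congr (fun _ _ _ _ => hD.separated_addOpener)
    fun _ _ => hD.separated_addOpener)

theorem WellFormed.gapLabels_addArc_left (hD : D.WellFormed l) (ho : o = l ∨ D.Open o)
    (hlt : ∀ a ∈ p, a < o) (hoe : o < e) (hel : e ≤ l + 1) :
    (D.addArc o l).gapLabels p e = markLast (D.gapLabels p o) := by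
  have hol := hD.le_of_eq_or_open ho
  have separated_iff {a b : ℕ} (hb : b ≤ l + 1) := hD.separated_addArc ho (a := a) hb
  rcases List.eq_nil_or_concat' p with rfl | ⟨p, a, rfl⟩
  · rfl
  · have hao : a < o := hlt a (by simp)
    have last_label : (D.addArc o l).Separated a e := (separated_iff hel).2 (.inr (.inl ⟨hao, hoe⟩))
    have init_labels : (D.addArc o l).gapLabels p a = D.gapLabels p a := by
      refine gapLabels_congr (fun b _ c hc => ?_) fun b _ => ?_
      · have := hlt c (by simp [hc])
        rw [separated_iff (by omega)]
        grind
      · rw [separated_iff (by omega)]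
        grind
    rw [gapLabels_concat, gapLabels_concat, markLast_concat, init_labels,
      separationLabel_eq_true.2 last_label]

theorem WellFormed.separated_addArc_of_lt (hD : D.WellFormed l) (ho : o = l ∨ D.Open o)
    {a b : ℕ} (ha : o < a) (hb : b ≤ l) :
    (D.addArc o l).Separated a b ↔ D.Separated a b := by
  rw [hD.separated_addArc ho (by omega)]
  grind

theorem WellFormed.gapLabels_addArc_right_of_forall_not (hD : D.WellFormed l)
    (ho : o = l ∨ D.Open o) (hgt : ∀ a ∈ p, o < a ∧ a < l) (hleft : ∀ a < o, ¬ D.Open a) :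
    (D.addArc o l).gapLabels p (l + 1) = D.gapLabels p l := by
  refine gapLabels_congr (fun a ha b hb => ?_) fun a ha => ?_
  · exact hD.separated_addArc_of_lt ho (hgt a ha).1 (hgt b hb).2.le
  · have := hgt a ha
    rw [hD.separated_addArc ho le_rfl, hD.separated_succ]
    grind

theorem WellFormed.gapLabels_addArc_right_of_exists (hD : D.WellFormed l)
    (ho : o = l ∨ D.Open o) (hgt : ∀ a ∈ p, o < a ∧ a < l) (hleft : ∃ a < o, D.Open a) :
    (D.addArc o l).gapLabels p (l + 1) = markLast (D.gapLabels p l) := by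
  rcases List.eq_nil_or_concat' p with rfl | ⟨p, a, rfl⟩
  · rfl
  · obtain ⟨hoa, hal⟩ := hgt a (by simp)
    have last_label : (D.addArc o l).Separated a (l + 1) :=
      (hD.separated_addArc ho le_rfl).2 (.inr (.inr ⟨hoa, hal, l.lt_succ_self, hleft⟩))
    have init_labels : (D.addArc o l).gapLabels p a = D.gapLabels p a :=
      gapLabels_congr
        (fun b hb c hc => hD.separated_addArc_of_lt ho (hgt b (by simp [hb])).1
          (hgt c (by simp [hc])).2.le)
        fun b hb => hD.separated_addArc_of_lt ho (hgt b (by simp [hb])).1 hal.le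
    rw [gapLabels_concat, gapLabels_concat, markLast_concat, init_labels,
      separationLabel_eq_true.2 last_label]

end ArcDiagram

/-- The steps that build an arc diagram from left to right: the next point becomes an open point,
a fixed point, or the right end of the arc from the `k`-th open point, counted from the left. -/
inductive ArcStep
  | opener
  | fixed
  | closer (k : ℕ)
  deriving DecidableEq

namespace ArcStep

/-- The open points left by a word of steps, in increasing order. As in `PartialAutomaton`, the
head of the word is the last step. -/
def openPoints : List ArcStep → List ℕ
  | [] => []
  | opener :: w => openPoints w ++ [w.length]
  | fixed :: w => openPoints w
  | closer k :: w => (openPoints w).eraseIdx k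

/-- The `k`-th open point; by convention it is the next point if there are at most `k` open
points, so that an invalid closer acts as a fixed point. -/
def openPoint (w : List ArcStep) (k : ℕ) : ℕ :=
  (openPoints w).getD k w.length

/-- Every closer refers to an existing open point. -/
def IsValid : List ArcStep → Prop
  | [] => True
  | closer k :: w => IsValid w ∧ k < (openPoints w).length
  | _ :: w => IsValid w

/-- The arc diagram built by a word of steps. -/
def wordDiagram : List ArcStep → ArcDiagram
  | [] => ArcDiagram.empty
  | opener :: w => (wordDiagram w).addOpener w.length
  | fixed :: w => (wordDiagram w).addArc w.length w.length
  | closer k :: w => (wordDiagram w).addArc (openPoint w k) w.length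

variable {w : List ArcStep} {k : ℕ}

theorem lt_length_of_mem_openPoints {x : ℕ} (hx : x ∈ openPoints w) : x < w.length := by
  induction w with
  | nil => simp [openPoints] at hx
  | cons s w ih =>
    rw [List.length_cons]
    cases s with
    | opener =>
      rcases List.mem_append.1 hx with hx | hx
      · exact (ih hx).trans (Nat.lt_succ_self _)
      · rw [List.mem_singleton.1 hx]
        exact Nat.lt_succ_self _
    | fixed => exact (ih hx).trans (Nat.lt_succ_self _)
    | closer k => exact (ih (List.mem_of_mem_eraseIdx hx)).trans (Nat.lt_succ_self _)

theorem pairwise_lt_openPoints (w : List ArcStep) : (openPoints w).Pairwise (· < ·) := by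
  induction w with
  | nil => exact .nil
  | cons s w ih =>
    cases s with
    | opener =>
      refine List.pairwise_append.2 ⟨ih, List.pairwise_singleton _ _, fun x hx y hy => ?_⟩
      rw [List.mem_singleton.1 hy]
      exact lt_length_of_mem_openPoints hx
    | fixed => exact ih
    | closer k => exact ih.sublist (List.eraseIdx_sublist _ _)

theorem openPoint_eq_getElem (hk : k < (openPoints w).length) :
    openPoint w k = (openPoints w)[k] :=
  List.getD_eq_getElem _ _ hk

theorem openPoint_mem (hk : k < (openPoints w).length) : openPoint w k ∈ openPoints w := by
  rw [openPoint_eq_getElem hk]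
  exact List.getElem_mem hk

theorem openPoint_of_length_le (hk : (openPoints w).length ≤ k) : openPoint w k = w.length :=
  List.getD_eq_default _ _ hk

theorem openPoint_eq_length_or_mem (w : List ArcStep) (k : ℕ) :
    openPoint w k = w.length ∨ openPoint w k ∈ openPoints w :=
  (le_or_gt _ k).imp openPoint_of_length_le openPoint_mem

theorem openPoints_eq_take_append_drop (hk : k < (openPoints w).length) :
    openPoints w = (openPoints w).take k ++ openPoint w k :: (openPoints w).drop (k + 1) := by
  rw [openPoint_eq_getElem hk, List.cons_getElem_drop_succ, List.take_append_drop]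

theorem pairwise_lt_take_append_drop (hk : k < (openPoints w).length) :
    ((openPoints w).take k ++ openPoint w k :: (openPoints w).drop (k + 1)).Pairwise (· < ·) :=
  openPoints_eq_take_append_drop hk ▸ pairwise_lt_openPoints w

theorem lt_openPoint_of_mem_take (hk : k < (openPoints w).length) {x : ℕ}
    (hx : x ∈ (openPoints w).take k) : x < openPoint w k :=
  (List.pairwise_append.1 (pairwise_lt_take_append_drop hk)).2.2 x hx _ (.head _)

theorem openPoint_lt_of_mem_drop (hk : k < (openPoints w).length) {x : ℕ}
    (hx : x ∈ (openPoints w).drop (k + 1)) : openPoint w k < x :=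
  List.rel_of_pairwise_cons (List.pairwise_append.1 (pairwise_lt_take_append_drop hk)).2.1 hx

theorem openPoints_closer :
    openPoints (closer k :: w) = (openPoints w).take k ++ (openPoints w).drop (k + 1) :=
  List.eraseIdx_eq_take_drop_succ _ _

theorem mem_openPoints_closer {x : ℕ} :
    x ∈ openPoints (closer k :: w) ↔ x ∈ openPoints w ∧ x ≠ openPoint w k := by
  rcases le_or_gt (openPoints w).length k with hk | hk
  · rw [openPoint_of_length_le hk, openPoints, List.eraseIdx_of_length_le hk]
    exact (and_iff_left_of_imp fun hx => (lt_length_of_mem_openPoints hx).ne).symm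
  · have mem_iff : x ∈ openPoints w ↔ x ∈ (openPoints w).take k ∨ x = openPoint w k ∨
        x ∈ (openPoints w).drop (k + 1) := by
      conv_lhs => rw [openPoints_eq_take_append_drop hk]
      simp
    have ne_of_mem_take := fun h => (lt_openPoint_of_mem_take hk (x := x) h).ne
    have ne_of_mem_drop := fun h => (openPoint_lt_of_mem_drop hk (x := x) h).ne'
    rw [openPoints_closer, List.mem_append, mem_iff]
    tauto

theorem mem_take_iff_lt_openPoint (hk : k < (openPoints w).length) {x : ℕ} :
    x ∈ (openPoints w).take k ↔ x ∈ openPoints w ∧ x < openPoint w k := by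
  refine ⟨fun hx => ⟨List.mem_of_mem_take hx, lt_openPoint_of_mem_take hk hx⟩, fun ⟨hx, hlt⟩ => ?_⟩
  rw [openPoints_eq_take_append_drop hk, List.mem_append, List.mem_cons] at hx
  rcases hx with hx | rfl | hx
  exacts [hx, absurd hlt (lt_irrefl _), absurd (openPoint_lt_of_mem_drop hk hx) hlt.not_gt]

theorem open_wordDiagram {x : ℕ} : (wordDiagram w).Open x ↔ x ∈ openPoints w := by
  induction w with
  | nil => simp [wordDiagram, openPoints, ArcDiagram.empty]
  | cons s w ih =>
    cases s with
    | opener => simp [wordDiagram, openPoints, ArcDiagram.addOpener, ih]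
    | fixed =>
      simp only [wordDiagram, openPoints, ArcDiagram.addArc, ih]
      exact and_iff_left_of_imp fun hx => (lt_length_of_mem_openPoints hx).ne
    | closer k => exact (and_congr_left' ih).trans mem_openPoints_closer.symm

theorem openPoint_eq_length_or_open (w : List ArcStep) (k : ℕ) :
    openPoint w k = w.length ∨ (wordDiagram w).Open (openPoint w k) := by
  rw [open_wordDiagram]
  exact openPoint_eq_length_or_mem w k

theorem wellFormed_wordDiagram (w : List ArcStep) : (wordDiagram w).WellFormed w.length := by
  induction w with
  | nil => exact ArcDiagram.wellFormed_empty
  | cons s w ih =>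
    cases s with
    | opener => exact ih.addOpener
    | fixed => exact ih.addArc (.inl rfl)
    | closer k => exact ih.addArc (openPoint_eq_length_or_open w k)

open ArcDiagram

/-- The automaton whose state is the number of open points and which only joins a point to the
first open point. -/
def heightAutomaton : PartialAutomaton ArcStep ℕ where
  start := 0
  Enabled
    | opener, _ => True
    | fixed, _ => True
    | closer k, h => k = 0 ∧ 0 < h
  next
    | opener, h => h + 1
    | fixed, h => h
    | closer _, h => h - 1

/-- The automaton whose state is the list of labels `ArcDiagram.gapLabels` of the open points, and
whose enabled steps are those that create neither a covered pair nor linked nestings. -/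
def labelAutomaton : PartialAutomaton ArcStep (List Bool) where
  start := []
  Enabled
    | opener, _ => True
    | fixed, β => true ∉ β
    | closer k, β => k < β.length ∧ true ∉ β.take k
  next
    | opener, β => β ++ [false]
    | fixed, β => markLast β
    | closer 0, β => β.tail
    | closer (k + 1), β => markLast (β.take (k + 1)) ++ markLast (β.drop (k + 2))

theorem state_heightAutomaton (hw : IsValid w) :
    heightAutomaton.state w = (openPoints w).length := by
  induction w with
  | nil => rfl
  | cons s w ih =>
    cases s with
    | opener => simp [PartialAutomaton.state, heightAutomaton, openPoints, ← ih hw]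
    | fixed => exact ih hw
    | closer k =>
      rw [openPoints, List.length_eraseIdx_of_lt hw.2, ← ih hw.1]
      rfl

theorem exists_open_lt_openPoint (hk : k < (openPoints w).length) :
    (∃ o < openPoint w k, (wordDiagram w).Open o) ↔ k ≠ 0 := by
  simp only [open_wordDiagram, and_comm (a := _ < _), ← mem_take_iff_lt_openPoint hk]
  refine ⟨?_, fun h => List.exists_mem_of_ne_nil _ fun htake => ?_⟩
  · rintro ⟨o, ho⟩ rfl
    simp at ho
  · rcases List.take_eq_nil_iff.1 htake with h0 | hnil
    · exact h h0
    · simp [hnil] at hk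

theorem accepts_heightAutomaton :
    heightAutomaton.Accepts w ↔ IsValid w ∧ ¬ (wordDiagram w).HasNestedArcs := by
  induction w with
  | nil => simp [PartialAutomaton.Accepts, IsValid, wordDiagram, HasNestedArcs, ArcDiagram.empty]
  | cons s w ih =>
    have hD := wellFormed_wordDiagram w
    rw [PartialAutomaton.Accepts, ih, and_assoc]
    cases s with
    | opener => simp [heightAutomaton, IsValid, wordDiagram, hD.hasNestedArcs_addOpener]
    | fixed => simp [heightAutomaton, IsValid, wordDiagram, hD.hasNestedArcs_addArc (.inl rfl)]
    | closer k =>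
      rw [IsValid, and_assoc]
      refine and_congr_right fun hw => ?_
      rw [state_heightAutomaton hw, wordDiagram,
        hD.hasNestedArcs_addArc (openPoint_eq_length_or_open w k), not_or, and_left_comm]
      have enabled_iff : heightAutomaton.Enabled (closer k) (openPoints w).length ↔
          k = 0 ∧ 0 < (openPoints w).length := Iff.rfl
      have not_nested_iff (hk : k < (openPoints w).length) :
          (¬ (openPoint w k ≠ w.length ∧ ∃ o < openPoint w k, (wordDiagram w).Open o)) ↔ k = 0 := by
        rw [exists_open_lt_openPoint hk,
          and_iff_right (lt_length_of_mem_openPoints (openPoint_mem hk)).ne, not_not]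
      rw [enabled_iff]
      grind

theorem headD_drop_openPoints (hk : k < (openPoints w).length) :
    ((openPoints w).drop k).headD w.length = openPoint w k := by
  rw [← List.getElem_cons_drop hk, ← openPoint_eq_getElem hk, List.headD_cons]

theorem drop_openPoints_bounds (hk : k < (openPoints w).length) :
    ∀ a ∈ (openPoints w).drop (k + 1), openPoint w k < a ∧ a < w.length := fun _ ha =>
  ⟨openPoint_lt_of_mem_drop hk ha, lt_length_of_mem_openPoints (List.mem_of_mem_drop ha)⟩

theorem gapLabels_wordDiagram_closer (hk : k < (openPoints w).length) :
    (wordDiagram (closer k :: w)).gapLabels (openPoints (closer k :: w)) (w.length + 1) =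
      labelAutomaton.next (closer k) ((wordDiagram w).gapLabels (openPoints w) w.length) := by
  have hD := wellFormed_wordDiagram w
  have ho := openPoint_eq_length_or_open w k
  have hright := drop_openPoints_bounds hk
  rw [wordDiagram, openPoints_closer]
  cases k with
  | zero =>
    have not_open : ∀ a < openPoint w 0, ¬ (wordDiagram w).Open a := fun a ha hopen =>
      (exists_open_lt_openPoint hk).1 ⟨a, ha, hopen⟩ rfl
    rw [List.take_zero, List.nil_append,
      hD.gapLabels_addArc_right_of_forall_not ho hright not_open, ← drop_gapLabels, List.drop_one]
    rfl
  | succ k =>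
    have exists_open := (exists_open_lt_openPoint hk).2 k.succ_ne_zero
    have next_head : openPoint w (k + 1) <
        ((openPoints w).drop (k + 1 + 1)).headD (w.length + 1) ∧
          ((openPoints w).drop (k + 1 + 1)).headD (w.length + 1) ≤ w.length + 1 := by
      cases hdrop : (openPoints w).drop (k + 1 + 1) with
      | nil => exact ⟨Nat.lt_succ_of_le (hD.le_of_eq_or_open ho), le_rfl⟩
      | cons a q =>
        have := hright a (by simp [hdrop])
        exact ⟨this.1, this.2.le.trans (Nat.le_succ _)⟩
    rw [gapLabels_append, hD.gapLabels_addArc_right_of_exists ho hright exists_open,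
      hD.gapLabels_addArc_left ho (fun a => lt_openPoint_of_mem_take hk) next_head.1 next_head.2,
      ← headD_drop_openPoints hk, ← take_gapLabels, ← drop_gapLabels]
    rfl

theorem state_labelAutomaton (hw : IsValid w) :
    labelAutomaton.state w = (wordDiagram w).gapLabels (openPoints w) w.length := by
  induction w with
  | nil => rfl
  | cons s w ih =>
    have hD := wellFormed_wordDiagram w
    cases s with
    | opener =>
      rw [PartialAutomaton.state, ih hw]
      exact hD.gapLabels_addOpener.symm
    | fixed =>
      rw [PartialAutomaton.state, ih hw]
      exact (hD.gapLabels_addArc_left (.inl rfl) (fun a => lt_length_of_mem_openPoints)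
        (Nat.lt_succ_self _) le_rfl).symm
    | closer k =>
      rw [PartialAutomaton.state, ih hw.1]
      exact (gapLabels_wordDiagram_closer hw.2).symm

theorem true_notMem_take_gapLabels (hk : k < (openPoints w).length) :
    true ∉ ((wordDiagram w).gapLabels (openPoints w) w.length).take k ↔
      ∀ o < openPoint w k, (wordDiagram w).Open o →
        ¬ (wordDiagram w).Separated o (openPoint w k) := by
  rw [take_gapLabels, headD_drop_openPoints hk,
    (wellFormed_wordDiagram w).true_notMem_gapLabels
      (fun a ha => open_wordDiagram.2 (List.mem_of_mem_take ha))
      ((pairwise_lt_openPoints w).sublist (List.take_sublist _ _))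
      fun a => lt_openPoint_of_mem_take hk]
  simp only [mem_take_iff_lt_openPoint hk, open_wordDiagram]
  grind

theorem true_notMem_gapLabels :
    true ∉ (wordDiagram w).gapLabels (openPoints w) w.length ↔
      ∀ o < w.length, (wordDiagram w).Open o → ¬ (wordDiagram w).Separated o w.length := by
  rw [(wellFormed_wordDiagram w).true_notMem_gapLabels (fun a => open_wordDiagram.2)
    (pairwise_lt_openPoints w) fun a => lt_length_of_mem_openPoints]
  simp only [open_wordDiagram]
  exact ⟨fun h o _ => h o, fun h o ho => h o (lt_length_of_mem_openPoints ho) ho⟩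

theorem accepts_labelAutomaton :
    labelAutomaton.Accepts w ↔ IsValid w ∧ (wordDiagram w).IsAdmissible := by
  induction w with
  | nil =>
    simp [PartialAutomaton.Accepts, IsValid, wordDiagram, IsAdmissible, HasCoveredPair,
      HasLinkedNestings, ArcDiagram.empty]
  | cons s w ih =>
    have hD := wellFormed_wordDiagram w
    rw [PartialAutomaton.Accepts, ih, and_assoc]
    cases s with
    | opener => simp [labelAutomaton, IsValid, wordDiagram, hD.isAdmissible_addOpener]
    | fixed =>
      refine and_congr_right fun hw => ?_
      rw [state_labelAutomaton hw, wordDiagram, hD.isAdmissible_addArc (.inl rfl),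
        ← true_notMem_gapLabels]
      rfl
    | closer k =>
      rw [IsValid, and_assoc]
      refine and_congr_right fun hw => ?_
      have enabled_iff (β : List Bool) :
          labelAutomaton.Enabled (closer k) β ↔ k < β.length ∧ true ∉ β.take k := Iff.rfl
      rw [state_labelAutomaton hw, wordDiagram,
        hD.isAdmissible_addArc (openPoint_eq_length_or_open w k), enabled_iff, length_gapLabels,
        and_left_comm]
      refine and_congr_right fun hk => and_congr_right fun _ => ?_
      exact true_notMem_take_gapLabels hk

end ArcStep

section WordCounts

open ArcStep PowerSeries

/-- The weight `M Y ^ h` of the state `h` of `heightAutomaton`. -/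
noncomputable def heightWeight (h : ℕ) : ℚ⟦X⟧ :=
  motzkinSeries * levelSeries ^ h

/-- The weight of a state of `labelAutomaton`: a label `true` contributes `Y Z` and a label `false`
contributes `Z`, so that the two values of a label together contribute `Y`. -/
noncomputable def labelWeight (γ : List Bool) : ℚ⟦X⟧ :=
  motzkinSeries * levelSeries ^ γ.count true * labelSeries ^ γ.length

theorem heightAutomaton_transferEquation (h : ℕ) :
    heightAutomaton.TransferEquation heightWeight h := by
  have level_eq : levelSeries = X * motzkinSeries := rfl
  cases h with
  | zero =>
    refine ⟨{(fixed, 0), (closer 0, 1)}, ?_, ?_⟩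
    · rintro (_ | _ | k) β <;> simp [PartialAutomaton.Transition, heightAutomaton]
      omega
    · rw [Finset.sum_pair (by simp)]
      simp only [heightWeight, heightAutomaton, if_true]
      linear_combination motzkinSeries_eq_one_add + (1 + levelSeries) * level_eq
  | succ h =>
    refine ⟨{(opener, h), (fixed, h + 1), (closer 0, h + 2)}, ?_, ?_⟩
    · rintro (_ | _ | k) β <;> simp [PartialAutomaton.Transition, heightAutomaton]
      omega
    · rw [Finset.sum_insert (by simp), Finset.sum_pair (by simp)]
      simp only [heightWeight, heightAutomaton, h.succ_ne_zero, if_false]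
      linear_combination motzkinSeries * levelSeries ^ h * level_eq +
        motzkinSeries * levelSeries ^ h * X * motzkinSeries_eq_one_add

theorem labelWeight_false_add_true (u v : List Bool) :
    labelWeight (u ++ false :: v) + labelWeight (u ++ true :: v) =
      levelSeries * labelWeight (u ++ v) := by
  simp only [labelWeight, List.count_append, List.length_append, List.count_cons_self,
    List.count_cons_of_ne Bool.false_ne_true, List.length_cons]
  linear_combination motzkinSeries * levelSeries ^ (u.count true + v.count true) *
    labelSeries ^ (u.length + v.length) * one_add_levelSeries_mul_labelSeries

theorem labelWeight_sum_two_labels (u v : List Bool) :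
    labelWeight (u ++ false :: (v ++ [false])) + (labelWeight (u ++ true :: (v ++ [false])) +
      (labelWeight (u ++ false :: (v ++ [true])) + labelWeight (u ++ true :: (v ++ [true])))) =
        levelSeries * (levelSeries * labelWeight (u ++ v)) := by
  have sum_last_label := labelWeight_false_add_true (u ++ v) []
  simp only [List.append_assoc, List.append_nil] at sum_last_label
  linear_combination labelWeight_false_add_true u (v ++ [false]) +
    labelWeight_false_add_true u (v ++ [true]) + levelSeries * sum_last_label

theorem transition_opener {β γ : List Bool} :
    labelAutomaton.Transition opener β γ ↔ γ = β ++ [false] :=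
  ⟨fun h => h.2.symm, fun h => ⟨trivial, h.symm⟩⟩

theorem markLast_replicate_succ (k : ℕ) :
    markLast (List.replicate (k + 1) false) = List.replicate k false ++ [true] := by
  rw [List.replicate_succ', markLast_concat]

theorem transition_fixed {β γ : List Bool} : labelAutomaton.Transition fixed β γ ↔
    β = [] ∧ γ = [] ∨
      ∃ k, β = List.replicate (k + 1) false ∧ γ = List.replicate k false ++ [true] := by
  constructor
  · rintro ⟨henabled, rfl⟩
    have all_false : β = List.replicate β.length false :=
      List.eq_replicate_iff.2 ⟨rfl, fun b hb => Bool.eq_false_iff.2 fun h => henabled (h ▸ hb)⟩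
    generalize β.length = m at all_false
    subst all_false
    cases m with
    | zero => exact .inl ⟨rfl, rfl⟩
    | succ k => exact .inr ⟨k, rfl, markLast_replicate_succ k⟩
  · rintro (⟨rfl, rfl⟩ | ⟨k, rfl, rfl⟩)
    · exact ⟨List.not_mem_nil, rfl⟩
    · exact ⟨fun h => by simpa using List.eq_of_mem_replicate h, markLast_replicate_succ k⟩

theorem transition_closer_zero {β γ : List Bool} :
    labelAutomaton.Transition (closer 0) β γ ↔ β = false :: γ ∨ β = true :: γ := by
  constructor
  · rintro ⟨⟨hlen, -⟩, rfl⟩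
    obtain ⟨b, β, rfl⟩ := List.exists_cons_of_length_pos hlen
    cases b
    exacts [.inl rfl, .inr rfl]
  · rintro (rfl | rfl) <;> exact ⟨⟨Nat.succ_pos _, by simp⟩, rfl⟩

theorem next_closer_succ (k : ℕ) (b : Bool) (δ : List Bool) :
    labelAutomaton.next (closer (k + 1)) (List.replicate (k + 1) false ++ b :: δ) =
      List.replicate k false ++ true :: markLast δ := by
  have take_eq : (List.replicate (k + 1) false ++ b :: δ).take (k + 1) =
      List.replicate (k + 1) false := List.take_left' List.length_replicate
  have drop_eq : (List.replicate (k + 1) false ++ b :: δ).drop (k + 2) = δ := by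
    rw [← List.concat_append]
    exact List.drop_left' (by simp)
  rw [labelAutomaton]
  simp only [take_eq, drop_eq, markLast_replicate_succ, List.append_assoc, List.singleton_append]

theorem transition_closer_succ {k : ℕ} {β γ : List Bool} :
    labelAutomaton.Transition (closer (k + 1)) β γ ↔ ∃ b δ,
      β = List.replicate (k + 1) false ++ b :: δ ∧
        γ = List.replicate k false ++ true :: markLast δ := by
  constructor
  · rintro ⟨⟨hlen, htake⟩, rfl⟩
    have take_eq : β.take (k + 1) = List.replicate (k + 1) false :=
      List.eq_replicate_iff.2 ⟨by simp [hlen.le],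
        fun b hb => Bool.eq_false_iff.2 fun h => htake (h ▸ hb)⟩
    have split : β = List.replicate (k + 1) false ++ β[k + 1] :: β.drop (k + 2) := by
      rw [← take_eq, List.cons_getElem_drop_succ, List.take_append_drop]
    exact ⟨_, _, split, (congrArg _ split).trans (next_closer_succ _ _ _)⟩
  · rintro ⟨b, δ, rfl, rfl⟩
    exact ⟨⟨by simp, by simp⟩, next_closer_succ k b δ⟩

/-- Every state `γ` is entered by `closer 0` from `false :: γ` and `true :: γ`, which together
contribute `Y` times the weight of `γ`. -/
theorem labelAutomaton_transferEquation_of_ne_closer_zero {γ : List Bool}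
    {Q : Finset (ArcStep × List Bool)}
    (hQ : ∀ s β, (s, β) ∈ Q ↔ s ≠ closer 0 ∧ labelAutomaton.Transition s β γ)
    (hγ : labelWeight γ = (if γ = [] then 1 else 0) +
      X * (levelSeries * labelWeight γ + ∑ p ∈ Q, labelWeight p.2)) :
    labelAutomaton.TransferEquation labelWeight γ := by
  have closer_zero_notMem (β : List Bool) : (closer 0, β) ∉ Q := fun h => ((hQ _ _).1 h).1 rfl
  refine ⟨insert (closer 0, false :: γ) (insert (closer 0, true :: γ) Q), fun s β => ?_, ?_⟩
  · simp only [Finset.mem_insert, Prod.mk.injEq, hQ]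
    by_cases hs : s = closer 0
    · subst hs
      simp [transition_closer_zero]
    · simp [hs]
  · rw [Finset.sum_insert (by simp [closer_zero_notMem]), Finset.sum_insert (closer_zero_notMem _),
      ← add_assoc]
    exact (labelWeight_false_add_true [] γ).symm ▸ hγ

theorem labelAutomaton_transferEquation_nil :
    labelAutomaton.TransferEquation labelWeight [] := by
  refine labelAutomaton_transferEquation_of_ne_closer_zero (Q := {(fixed, [])}) ?_ ?_
  · rintro (_ | _ | _ | k) β <;>
      simp [transition_opener, transition_fixed, transition_closer_succ]
  · have level_eq : levelSeries = X * motzkinSeries := rfl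
    simp only [labelWeight, Finset.sum_singleton, List.count_nil, List.length_nil, if_true]
    linear_combination motzkinSeries_eq_one_add + (1 + levelSeries) * level_eq

theorem concat_false_ne_append_markLast (δ δ' u : List Bool) :
    δ ++ [false] ≠ u ++ true :: markLast δ' := by
  intro h
  have := congrArg List.getLast? h
  rcases List.eq_nil_or_concat' δ' with rfl | ⟨δ', b, rfl⟩
  · simp [markLast_nil] at this
  · simp [markLast_concat, List.getLast?_append, List.getLast?_cons] at this

theorem labelAutomaton_transferEquation_concat_false (δ : List Bool) :
    labelAutomaton.TransferEquation labelWeight (δ ++ [false]) := by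
  refine labelAutomaton_transferEquation_of_ne_closer_zero (Q := {(opener, δ)}) ?_ ?_
  · rintro (_ | _ | _ | k) β
    · simp [transition_opener, eq_comm]
    · simp [transition_fixed]
    · simp
    · simp [transition_closer_succ, concat_false_ne_append_markLast]
  · simp only [labelWeight, Finset.sum_singleton, List.count_append, List.length_append,
      List.append_eq_nil_iff, List.cons_ne_self, and_false, if_false,
      List.count_cons_of_ne Bool.false_ne_true, List.count_nil, List.length_cons, List.length_nil]
    linear_combination motzkinSeries * levelSeries ^ δ.count true * labelSeries ^ δ.length *
      labelSeries_eq_X_mul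

theorem replicate_false_append_true_inj {k j : ℕ} {δ ε : List Bool} :
    List.replicate k false ++ true :: δ = List.replicate j false ++ true :: ε ↔
      k = j ∧ δ = ε := by
  refine ⟨fun h => ?_, by rintro ⟨rfl, rfl⟩; rfl⟩
  induction k generalizing j with
  | zero => cases j <;> simp_all [List.replicate_succ]
  | succ k ih =>
    cases j with
    | zero => simp [List.replicate_succ] at h
    | succ j => exact (ih (List.cons.inj h).2).imp_left (congrArg (· + 1))

theorem markLast_eq_nil {δ : List Bool} : markLast δ = [] ↔ δ = [] := by
  rcases List.eq_nil_or_concat' δ with rfl | ⟨δ, b, rfl⟩ <;> simp [markLast_concat, markLast_nil]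

theorem markLast_eq_concat_true {δ ε : List Bool} :
    markLast ε = δ ++ [true] ↔ ∃ b, ε = δ ++ [b] := by
  rcases List.eq_nil_or_concat' ε with rfl | ⟨ε, b, rfl⟩ <;> simp [markLast_concat, markLast_nil]

theorem labelAutomaton_transferEquation_replicate_append_true (k : ℕ) :
    labelAutomaton.TransferEquation labelWeight (List.replicate k false ++ [true]) := by
  refine labelAutomaton_transferEquation_of_ne_closer_zero
    (Q := {(fixed, List.replicate (k + 1) false),
      (closer (k + 1), List.replicate (k + 1) false ++ [false]),
      (closer (k + 1), List.replicate (k + 1) false ++ [true])}) ?_ ?_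
  · rintro (_ | _ | _ | j) β
    · simp [transition_opener]
    · simp [transition_fixed]
    · simp
    · simp only [transition_closer_succ, replicate_false_append_true_inj, eq_comm (a := []),
        markLast_eq_nil, Finset.mem_insert, Finset.mem_singleton, Prod.mk.injEq, closer.injEq,
        reduceCtorEq, Nat.add_right_cancel_iff, Bool.exists_bool]
      grind
  · have level_eq : levelSeries = X * motzkinSeries := rfl
    have weight_target : labelWeight (List.replicate k false ++ [true]) =
        motzkinSeries * levelSeries * labelSeries ^ (k + 1) := by
      simp [labelWeight, List.count_replicate]
    have weight_source : labelWeight (List.replicate (k + 1) false) =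
        motzkinSeries * labelSeries ^ (k + 1) := by
      simp [labelWeight, List.count_replicate]
    rw [Finset.sum_insert (by simp), Finset.sum_pair (by simp), labelWeight_false_add_true,
      if_neg (by simp), weight_target, List.append_nil, weight_source]
    linear_combination motzkinSeries * labelSeries ^ (k + 1) *
      (level_eq + X * motzkinSeries_eq_one_add)

theorem labelAutomaton_transferEquation_replicate_append_true_concat (k : ℕ) (δ : List Bool) :
    labelAutomaton.TransferEquation labelWeight
      (List.replicate k false ++ true :: (δ ++ [true])) := by
  let source (b b' : Bool) : List Bool := List.replicate (k + 1) false ++ b :: (δ ++ [b'])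
  refine labelAutomaton_transferEquation_of_ne_closer_zero
    (Q := {(closer (k + 1), source false false), (closer (k + 1), source true false),
      (closer (k + 1), source false true), (closer (k + 1), source true true)}) ?_ ?_
  · have ne_concat_false (β : List Bool) :
        List.replicate k false ++ true :: (δ ++ [true]) ≠ β ++ [false] := by
      rw [← markLast_concat δ true]
      exact (concat_false_ne_append_markLast _ _ _).symm
    rintro (_ | _ | _ | j) β
    · simp only [transition_opener, ne_concat_false]
      simp
    · simp [transition_fixed, replicate_false_append_true_inj]
    · simp
    · simp only [transition_closer_succ, replicate_false_append_true_inj,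
        eq_comm (a := δ ++ [true]), markLast_eq_concat_true, Finset.mem_insert,
        Finset.mem_singleton, Prod.mk.injEq, closer.injEq, Nat.add_right_cancel_iff,
        Bool.exists_bool]
      grind
  · have weight_target : labelWeight (List.replicate k false ++ true :: (δ ++ [true])) =
        motzkinSeries * levelSeries ^ (δ.count true + 2) * labelSeries ^ (k + δ.length + 2) := by
      simp [labelWeight, List.count_replicate, add_assoc]
    have weight_source : labelWeight (List.replicate (k + 1) false ++ δ) =
        motzkinSeries * levelSeries ^ δ.count true * labelSeries ^ (k + δ.length + 1) := by
      simp [labelWeight, List.count_replicate, add_right_comm]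
    rw [Finset.sum_insert (by simp [source]), Finset.sum_insert (by simp [source]),
      Finset.sum_pair (by simp [source]), if_neg (by simp), labelWeight_sum_two_labels,
      weight_target, weight_source]
    linear_combination motzkinSeries * levelSeries ^ (δ.count true + 2) *
      labelSeries ^ (k + δ.length + 1) * labelSeries_eq_X_mul

theorem exists_eq_replicate_or_append (γ : List Bool) :
    (∃ k, γ = List.replicate k false) ∨ ∃ k δ, γ = List.replicate k false ++ true :: δ := by
  induction γ with
  | nil => exact .inl ⟨0, rfl⟩
  | cons b γ ih =>
    cases b with
    | true => exact .inr ⟨0, γ, rfl⟩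
    | false =>
      rcases ih with ⟨k, rfl⟩ | ⟨k, δ, rfl⟩
      exacts [.inl ⟨k + 1, rfl⟩, .inr ⟨k + 1, δ, rfl⟩]

theorem labelAutomaton_transferEquation (γ : List Bool) :
    labelAutomaton.TransferEquation labelWeight γ := by
  rcases List.eq_nil_or_concat' γ with rfl | ⟨δ, b, rfl⟩
  · exact labelAutomaton_transferEquation_nil
  cases b with
  | false => exact labelAutomaton_transferEquation_concat_false δ
  | true =>
    rcases exists_eq_replicate_or_append δ with ⟨k, rfl⟩ | ⟨k, δ, rfl⟩
    · exact labelAutomaton_transferEquation_replicate_append_true k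
    · rw [List.append_assoc, List.cons_append]
      exact labelAutomaton_transferEquation_replicate_append_true_concat k δ

theorem ncard_words_start {S : Type*} [DecidableEq S] {A : PartialAutomaton ArcStep S}
    {wt : S → ℚ⟦X⟧} (hwt : ∀ γ, A.TransferEquation wt γ) (hstart : wt A.start = motzkinSeries)
    (n : ℕ) : (A.words n A.start).ncard = motzkin n := by
  have cast_eq := (A.ncard_words hwt n A.start).2
  rw [hstart, motzkinSeries, coeff_mk] at cast_eq
  exact_mod_cast cast_eq

theorem ncard_closed_words_not_hasNestedArcs (n : ℕ) :
    {w | w.length = n ∧ IsValid w ∧ openPoints w = [] ∧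
      ¬ (wordDiagram w).HasNestedArcs}.ncard = motzkin n := by
  rw [← ncard_words_start heightAutomaton_transferEquation
    (by simp [heightAutomaton, heightWeight])]
  congr 1
  ext w
  simp only [PartialAutomaton.words, Set.mem_ofPred_eq, accepts_heightAutomaton, and_assoc]
  refine and_congr_right fun _ => and_congr_right fun hw => ?_
  rw [state_heightAutomaton hw, and_comm]
  exact and_congr_right' List.length_eq_zero_iff.symm

theorem ncard_closed_words_isAdmissible (n : ℕ) :
    {w | w.length = n ∧ IsValid w ∧ openPoints w = [] ∧
      (wordDiagram w).IsAdmissible}.ncard = motzkin n := by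
  rw [← ncard_words_start labelAutomaton_transferEquation (by simp [labelAutomaton, labelWeight])]
  congr 1
  ext w
  simp only [PartialAutomaton.words, Set.mem_ofPred_eq, accepts_labelAutomaton, and_assoc]
  refine and_congr_right fun _ => and_congr_right fun hw => ?_
  rw [state_labelAutomaton hw, and_comm]
  refine and_congr_right' ?_
  rw [← List.length_eq_zero_iff, ← ArcDiagram.length_gapLabels, List.length_eq_zero_iff]
  rfl

end WordCounts

namespace ArcDiagram

variable {D : ArcDiagram} {l o x y : ℕ}

/-- Some arc joins `x` and `y`. -/
def Matched (D : ArcDiagram) (x y : ℕ) : Prop :=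
  D.Arc x y ∨ D.Arc y x

/-- Every point below `l` is either open or joined to exactly one point, possibly itself. -/
structure IsPartialMatching (D : ArcDiagram) (l : ℕ) : Prop extends WellFormed D l where
  existsUnique_matched : ∀ {x}, x < l → ¬ D.Open x → ∃! y, D.Matched x y

/-- Remove the open point `l`. -/
def removeOpener (D : ArcDiagram) (l : ℕ) : ArcDiagram where
  Arc := D.Arc
  Open x := D.Open x ∧ x ≠ l

/-- Remove the point `l` and the arc that joins it to `o`; if `o ≠ l` then `o` becomes open. -/
def removeArc (D : ArcDiagram) (o l : ℕ) : ArcDiagram where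
  Arc x y := D.Arc x y ∧ y ≠ l
  Open x := D.Open x ∨ x = o ∧ o ≠ l

theorem matched_comm : D.Matched x y ↔ D.Matched y x :=
  or_comm

theorem WellFormed.lt_of_matched (hD : D.WellFormed l) (h : D.Matched x y) : x < l :=
  h.elim (fun h => (hD.arc_le h).trans_lt (hD.arc_lt h)) hD.arc_lt

theorem WellFormed.not_open_of_matched (hD : D.WellFormed l) (h : D.Matched x y) : ¬ D.Open x :=
  h.elim hD.left_not_open hD.right_not_open

theorem WellFormed.removeOpener_addOpener (hD : D.WellFormed l) :
    (D.addOpener l).removeOpener l = D := by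
  have open_ne {x : ℕ} (hx : D.Open x) : x ≠ l := (hD.open_lt hx).ne
  ext x y
  · rfl
  · simp only [ArcDiagram.removeOpener, ArcDiagram.addOpener]
    grind

theorem WellFormed.removeArc_addArc (hD : D.WellFormed l) (ho : o = l ∨ D.Open o) :
    (D.addArc o l).removeArc o l = D := by
  ext x y
  · have arc_ne (h : D.Arc x y) : y ≠ l := (hD.arc_lt h).ne
    simp only [ArcDiagram.removeArc, ArcDiagram.addArc]
    grind
  · have open_ne (hx : D.Open x) : x ≠ l := (hD.open_lt hx).ne
    simp only [ArcDiagram.removeArc, ArcDiagram.addArc]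
    grind

theorem addOpener_removeOpener (hl : D.Open l) : (D.removeOpener l).addOpener l = D := by
  ext x y
  · rfl
  · simp only [ArcDiagram.removeOpener, ArcDiagram.addOpener]
    grind

theorem IsPartialMatching.eq_of_matched (hD : D.IsPartialMatching l) {y' : ℕ}
    (h : D.Matched x y) (h' : D.Matched x y') : y = y' :=
  (hD.existsUnique_matched (hD.lt_of_matched h) (hD.not_open_of_matched h)).unique h h'

theorem IsPartialMatching.addArc_removeArc (hD : D.IsPartialMatching (l + 1)) (harc : D.Arc o l) :
    (D.removeArc o l).addArc o l = D := by
  ext x y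
  · have eq_of_arc (h : D.Arc x l) : x = o := hD.eq_of_matched (.inr h) (.inr harc)
    simp only [ArcDiagram.removeArc, ArcDiagram.addArc]
    grind
  · have hleft := hD.left_not_open harc
    simp only [ArcDiagram.removeArc, ArcDiagram.addArc]
    grind

theorem IsPartialMatching.exists_arc (hD : D.IsPartialMatching (l + 1)) (hl : ¬ D.Open l) :
    ∃ o, D.Arc o l := by
  obtain ⟨o, h | h, -⟩ := hD.existsUnique_matched l.lt_succ_self hl
  · obtain rfl : l = o := (hD.arc_le h).antisymm (Nat.lt_succ_iff.1 (hD.arc_lt h))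
    exact ⟨l, h⟩
  · exact ⟨o, h⟩

theorem isPartialMatching_empty : empty.IsPartialMatching 0 where
  toWellFormed := wellFormed_empty
  existsUnique_matched h := absurd h (Nat.not_lt_zero _)

theorem IsPartialMatching.addOpener (hD : D.IsPartialMatching l) :
    (D.addOpener l).IsPartialMatching (l + 1) where
  toWellFormed := hD.toWellFormed.addOpener
  existsUnique_matched hx hopen :=
    hD.existsUnique_matched (lt_of_le_of_ne (Nat.lt_succ_iff.1 hx) (not_or.1 hopen).2)
      (not_or.1 hopen).1

theorem matched_addArc :
    (D.addArc o l).Matched x y ↔ D.Matched x y ∨ x = o ∧ y = l ∨ x = l ∧ y = o := by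
  simp only [Matched, addArc]
  tauto

theorem IsPartialMatching.addArc (hD : D.IsPartialMatching l) (ho : o = l ∨ D.Open o) :
    (D.addArc o l).IsPartialMatching (l + 1) where
  toWellFormed := hD.toWellFormed.addArc ho
  existsUnique_matched {x} hx hopen := by
    have matched_of_ne (hxl : x ≠ l) (hxo : x ≠ o) : ∃! y, D.Matched x y :=
      hD.existsUnique_matched (by omega) fun h => hopen ⟨h, hxo⟩
    have lt_of_matched (y : ℕ) : D.Matched x y → x < l := hD.lt_of_matched
    have not_open_of_matched (y : ℕ) : D.Matched x y → ¬ D.Open x := hD.not_open_of_matched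
    simp only [matched_addArc]
    by_cases hxl : x = l
    · exact ⟨o, by simp [hxl], by grind⟩
    by_cases hxo : x = o
    · exact ⟨l, by simp [hxo], by grind⟩
    simpa [hxl, hxo] using matched_of_ne hxl hxo

theorem IsPartialMatching.removeOpener (hD : D.IsPartialMatching (l + 1)) (hl : D.Open l) :
    (D.removeOpener l).IsPartialMatching l where
  arc_le h := hD.arc_le h
  arc_lt h := lt_of_le_of_ne (Nat.lt_succ_iff.1 (hD.arc_lt h))
    fun hy => hD.right_not_open h (hy ▸ hl)
  open_lt h := lt_of_le_of_ne (Nat.lt_succ_iff.1 (hD.open_lt h.1)) h.2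
  left_not_open h hx := hD.left_not_open h hx.1
  right_not_open h hy := hD.right_not_open h hy.1
  existsUnique_matched hx hopen :=
    hD.existsUnique_matched (hx.trans l.lt_succ_self) fun h => hopen ⟨h, hx.ne⟩

theorem IsPartialMatching.removeArc (hD : D.IsPartialMatching (l + 1)) (harc : D.Arc o l) :
    (D.removeArc o l).IsPartialMatching l where
  arc_le h := hD.arc_le h.1
  arc_lt h := lt_of_le_of_ne (Nat.lt_succ_iff.1 (hD.arc_lt h.1)) h.2
  open_lt := by
    have hol := hD.arc_le harc
    rintro x (h | ⟨rfl, hne⟩)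
    · exact lt_of_le_of_ne (Nat.lt_succ_iff.1 (hD.open_lt h))
        fun hx => hD.right_not_open harc (hx ▸ h)
    · omega
  left_not_open := by
    rintro x y ⟨h, hy⟩ (hx | ⟨rfl, -⟩)
    exacts [hD.left_not_open h hx, hy (hD.eq_of_matched (.inl h) (.inl harc))]
  right_not_open := by
    rintro x y ⟨h, hy⟩ (hy' | ⟨rfl, hne⟩)
    · exact hD.right_not_open h hy'
    · obtain rfl : x = l := hD.eq_of_matched (.inr h) (.inl harc)
      exact hne ((hD.arc_le harc).antisymm (hD.arc_le h))
  existsUnique_matched {x} hx hopen := by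
    obtain ⟨hx_open, hxo⟩ := not_or.1 hopen
    obtain ⟨y, hy, huniq⟩ := hD.existsUnique_matched (hx.trans l.lt_succ_self) hx_open
    have hyl : y ≠ l := by
      rintro rfl
      have partner_eq : x = o := hD.eq_of_matched (matched_comm.1 hy) (.inr harc)
      exact hxo ⟨partner_eq, partner_eq ▸ hx.ne⟩
    exact ⟨y, hy.imp (fun h => ⟨h, hyl⟩) fun h => ⟨h, hx.ne⟩,
      fun y' hy' => huniq y' (hy'.imp And.left And.left)⟩

end ArcDiagram

namespace ArcStep

open ArcDiagram

theorem isPartialMatching_wordDiagram (w : List ArcStep) :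
    (wordDiagram w).IsPartialMatching w.length := by
  induction w with
  | nil => exact isPartialMatching_empty
  | cons s w ih =>
    cases s with
    | opener => exact ih.addOpener
    | fixed => exact ih.addArc (.inl rfl)
    | closer k => exact ih.addArc (openPoint_eq_length_or_open w k)

theorem exists_wordDiagram_eq {D : ArcDiagram} {l : ℕ} (hD : D.IsPartialMatching l) :
    ∃ w, w.length = l ∧ IsValid w ∧ wordDiagram w = D := by
  induction l generalizing D with
  | zero =>
    refine ⟨[], rfl, trivial, ?_⟩
    ext x y
    · exact iff_of_false id fun h => Nat.not_lt_zero _ (hD.arc_lt h)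
    · exact iff_of_false id fun h => Nat.not_lt_zero _ (hD.open_lt h)
  | succ l ih =>
    by_cases hl : D.Open l
    · obtain ⟨w, rfl, hw, heq⟩ := ih (hD.removeOpener hl)
      refine ⟨opener :: w, rfl, hw, ?_⟩
      rw [wordDiagram, heq, addOpener_removeOpener hl]
    obtain ⟨o, harc⟩ := hD.exists_arc hl
    obtain ⟨w, rfl, hw, heq⟩ := ih (hD.removeArc harc)
    by_cases hol : o = w.length
    · refine ⟨fixed :: w, rfl, hw, ?_⟩
      subst hol
      rw [wordDiagram, heq, hD.addArc_removeArc harc]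
    · have o_mem : o ∈ openPoints w := open_wordDiagram.1 (heq ▸ .inr ⟨rfl, hol⟩)
      obtain ⟨k, hk, hko⟩ := List.mem_iff_getElem.1 o_mem
      refine ⟨closer k :: w, rfl, ⟨hw, hk⟩, ?_⟩
      rw [wordDiagram, openPoint_eq_getElem hk, hko, heq, hD.addArc_removeArc harc]

/-- The left end of the arc added by a step other than `opener`. -/
def leftEnd (w : List ArcStep) : ArcStep → ℕ
  | closer k => openPoint w k
  | _ => w.length

theorem wordDiagram_cons_of_ne_opener {s : ArcStep} (hs : s ≠ opener) (w : List ArcStep) :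
    wordDiagram (s :: w) = (wordDiagram w).addArc (leftEnd w s) w.length := by
  cases s with
  | opener => exact absurd rfl hs
  | _ => rfl

theorem leftEnd_eq_length_or_open (w : List ArcStep) (s : ArcStep) :
    leftEnd w s = w.length ∨ (wordDiagram w).Open (leftEnd w s) := by
  cases s with
  | closer k => exact openPoint_eq_length_or_open w k
  | _ => exact .inl rfl

theorem openPoint_inj {w : List ArcStep} {j k : ℕ} (hj : j < (openPoints w).length)
    (hk : k < (openPoints w).length) : openPoint w j = openPoint w k ↔ j = k := by
  rw [openPoint_eq_getElem hj, openPoint_eq_getElem hk]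
  exact (pairwise_lt_openPoints w).nodup.getElem_inj_iff

theorem leftEnd_inj {w : List ArcStep} {s t : ArcStep} (hsw : IsValid (s :: w))
    (htw : IsValid (t :: w)) (hs : s ≠ opener) (ht : t ≠ opener) :
    leftEnd w s = leftEnd w t ↔ s = t := by
  have openPoint_lt {k : ℕ} (hk : IsValid (closer k :: w)) : openPoint w k < w.length :=
    lt_length_of_mem_openPoints (openPoint_mem hk.2)
  cases s <;> cases t
  case closer.closer j k => simpa [leftEnd] using openPoint_inj hsw.2 htw.2
  all_goals grind [leftEnd]

theorem open_wordDiagram_cons {w : List ArcStep} {s : ArcStep} :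
    (wordDiagram (s :: w)).Open w.length ↔ s = opener := by
  refine ⟨fun h => by_contra fun hs => ?_, fun h => h ▸ .inr rfl⟩
  rw [wordDiagram_cons_of_ne_opener hs] at h
  exact ((wellFormed_wordDiagram w).open_lt h.1).false

theorem IsValid.of_cons {w : List ArcStep} {s : ArcStep} (h : IsValid (s :: w)) : IsValid w := by
  cases s with
  | closer k => exact h.1
  | _ => exact h

theorem wordDiagram_cons_inj {w w' : List ArcStep} {s s' : ArcStep} (hlen : w.length = w'.length)
    (heq : wordDiagram (s :: w) = wordDiagram (s' :: w')) : wordDiagram w = wordDiagram w' ∧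
      (s = opener ∧ s' = opener ∨ s ≠ opener ∧ s' ≠ opener ∧ leftEnd w s = leftEnd w' s') := by
  have hD := wellFormed_wordDiagram w
  have hD' := wellFormed_wordDiagram w'
  have opener_iff : s = opener ↔ s' = opener := by
    rw [← open_wordDiagram_cons (w := w), heq, hlen, open_wordDiagram_cons]
  by_cases hs : s = opener
  · obtain rfl : s' = opener := opener_iff.1 hs
    subst hs
    refine ⟨?_, .inl ⟨rfl, rfl⟩⟩
    rw [wordDiagram, wordDiagram, ← hlen] at heq
    rw [← hD.removeOpener_addOpener, heq, hlen, hD'.removeOpener_addOpener]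
  · have hs' : s' ≠ opener := fun h => hs (opener_iff.2 h)
    have matching := isPartialMatching_wordDiagram (s :: w)
    rw [wordDiagram_cons_of_ne_opener hs] at matching
    rw [wordDiagram_cons_of_ne_opener hs, wordDiagram_cons_of_ne_opener hs', ← hlen] at heq
    have leftEnd_eq : leftEnd w s = leftEnd w' s' :=
      matching.eq_of_matched (.inr (.inr ⟨rfl, rfl⟩)) (heq ▸ .inr (.inr ⟨rfl, rfl⟩))
    refine ⟨?_, .inr ⟨hs, hs', leftEnd_eq⟩⟩
    rw [← hD.removeArc_addArc (leftEnd_eq_length_or_open w s), heq, leftEnd_eq, hlen,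
      hD'.removeArc_addArc (leftEnd_eq_length_or_open w' s')]

theorem wordDiagram_inj {w w' : List ArcStep} (hlen : w.length = w'.length) (hw : IsValid w)
    (hw' : IsValid w') (heq : wordDiagram w = wordDiagram w') : w = w' := by
  induction w generalizing w' with
  | nil => exact (List.length_eq_zero_iff.1 hlen.symm).symm
  | cons s w ih =>
    cases w' with
    | nil => simp at hlen
    | cons s' w' =>
      replace hlen : w.length = w'.length := Nat.succ_injective hlen
      obtain ⟨init_eq, hstep⟩ := wordDiagram_cons_inj hlen heq
      obtain rfl := ih hlen hw.of_cons hw'.of_cons init_eq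
      rcases hstep with ⟨rfl, rfl⟩ | ⟨hs, hs', leftEnd_eq⟩
      · rfl
      · rw [(leftEnd_inj hw hw' hs hs').1 leftEnd_eq]

end ArcStep

section InvolutionDiagram

open ArcDiagram ArcStep

variable {n : ℕ} {σ τ : Equiv.Perm (Fin n)}

/-- The arc diagram of an involution: every point is joined to its image. -/
def involutionDiagram (σ : Equiv.Perm (Fin n)) : ArcDiagram where
  Arc x y := ∃ i : Fin n, i ≤ σ i ∧ x = i ∧ y = σ i
  Open _ := False

theorem apply_apply_of_inv_eq (hσ : σ⁻¹ = σ) (i : Fin n) : σ (σ i) = i := by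
  rw [← Equiv.Perm.mul_apply, mul_eq_one_iff_inv_eq.2 hσ, Equiv.Perm.one_apply]

theorem matched_involutionDiagram (hσ : σ⁻¹ = σ) {x y : ℕ} :
    (involutionDiagram σ).Matched x y ↔ ∃ i : Fin n, x = i ∧ y = σ i := by
  constructor
  · rintro (⟨i, -, rfl, rfl⟩ | ⟨i, -, rfl, rfl⟩)
    exacts [⟨i, rfl, rfl⟩, ⟨σ i, rfl, by rw [apply_apply_of_inv_eq hσ]⟩]
  · rintro ⟨i, rfl, rfl⟩
    rcases le_total i (σ i) with h | h
    · exact .inl ⟨i, h, rfl, rfl⟩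
    · exact .inr ⟨σ i, by rwa [apply_apply_of_inv_eq hσ], rfl, by rw [apply_apply_of_inv_eq hσ]⟩

theorem isPartialMatching_involutionDiagram (hσ : σ⁻¹ = σ) :
    (involutionDiagram σ).IsPartialMatching n where
  arc_le := by
    rintro x y ⟨i, hi, rfl, rfl⟩
    exact hi
  arc_lt := by
    rintro x y ⟨i, -, rfl, rfl⟩
    exact (σ i).2
  open_lt := False.elim
  left_not_open _ := id
  right_not_open _ := id
  existsUnique_matched {x} hx _ := by
    simp only [matched_involutionDiagram hσ]
    refine ⟨σ ⟨x, hx⟩, ⟨⟨x, hx⟩, rfl, rfl⟩, ?_⟩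
    rintro _ ⟨i, rfl, rfl⟩
    rfl

theorem involutionDiagram_inj (hσ : σ⁻¹ = σ) (hτ : τ⁻¹ = τ)
    (h : involutionDiagram σ = involutionDiagram τ) : σ = τ := by
  ext i
  have matched_τ : (involutionDiagram τ).Matched i (σ i) :=
    h ▸ (matched_involutionDiagram hσ).2 ⟨i, rfl, rfl⟩
  exact (isPartialMatching_involutionDiagram hτ).eq_of_matched matched_τ
    ((matched_involutionDiagram hτ).2 ⟨i, rfl, rfl⟩)

theorem exists_involutionDiagram_eq {D : ArcDiagram} (hD : D.IsPartialMatching n)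
    (hopen : ∀ x, ¬ D.Open x) : ∃ σ : Equiv.Perm (Fin n), σ⁻¹ = σ ∧ involutionDiagram σ = D := by
  have exists_partner (i : Fin n) : ∃ j : Fin n, D.Matched i j := by
    obtain ⟨y, hy, -⟩ := hD.existsUnique_matched i.2 (hopen i)
    exact ⟨⟨y, hD.lt_of_matched (matched_comm.1 hy)⟩, hy⟩
  choose f hf using exists_partner
  have involutive : Function.Involutive f := fun i =>
    Fin.ext (hD.eq_of_matched (hf (f i)) (matched_comm.1 (hf i)))
  refine ⟨involutive.toPerm, rfl, ?_⟩
  ext x y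
  · constructor
    · rintro ⟨i, hi, rfl, rfl⟩
      refine (hf i).elim id fun h => ?_
      have fixed : f i = i := le_antisymm (hD.arc_le h) hi
      rw [fixed] at h
      rwa [Function.Involutive.coe_toPerm, fixed]
    · intro h
      have hx := hD.lt_of_matched (.inl h)
      have partner_eq : y = f ⟨x, hx⟩ := hD.eq_of_matched (.inl h) (hf ⟨x, hx⟩)
      exact ⟨⟨x, hx⟩, Fin.le_def.2 ((hD.arc_le h).trans_eq partner_eq), rfl, partner_eq⟩
  · exact iff_of_false id (hopen x)

theorem image_involutionDiagram (P : ArcDiagram → Prop) (n : ℕ) :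
    involutionDiagram '' {σ : Equiv.Perm (Fin n) | σ⁻¹ = σ ∧ P (involutionDiagram σ)} =
      {D | D.IsPartialMatching n ∧ (∀ x, ¬ D.Open x) ∧ P D} := by
  ext D
  constructor
  · rintro ⟨σ, ⟨hσ, hP⟩, rfl⟩
    exact ⟨isPartialMatching_involutionDiagram hσ, fun _ => id, hP⟩
  · rintro ⟨hD, hopen, hP⟩
    obtain ⟨σ, hσ, rfl⟩ := exists_involutionDiagram_eq hD hopen
    exact ⟨σ, ⟨hσ, hP⟩, rfl⟩

theorem image_wordDiagram (P : ArcDiagram → Prop) (n : ℕ) :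
    wordDiagram '' {w | w.length = n ∧ IsValid w ∧ openPoints w = [] ∧ P (wordDiagram w)} =
      {D | D.IsPartialMatching n ∧ (∀ x, ¬ D.Open x) ∧ P D} := by
  ext D
  constructor
  · rintro ⟨w, ⟨rfl, -, hopen, hP⟩, rfl⟩
    refine ⟨isPartialMatching_wordDiagram w, fun x hx => ?_, hP⟩
    rw [open_wordDiagram, hopen] at hx
    exact List.not_mem_nil hx
  · rintro ⟨hD, hopen, hP⟩
    obtain ⟨w, hlen, hw, rfl⟩ := exists_wordDiagram_eq hD
    refine ⟨w, ⟨hlen, hw, ?_, hP⟩, rfl⟩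
    exact List.eq_nil_iff_forall_not_mem.2 fun x hx => hopen x (open_wordDiagram.2 hx)

theorem card_involutions_eq_ncard_words (P : ArcDiagram → Prop) (n : ℕ) :
    Nat.card {σ : Equiv.Perm (Fin n) // σ⁻¹ = σ ∧ P (involutionDiagram σ)} =
      {w | w.length = n ∧ IsValid w ∧ openPoints w = [] ∧ P (wordDiagram w)}.ncard := by
  have injOn_involutions : Set.InjOn involutionDiagram
      {σ : Equiv.Perm (Fin n) | σ⁻¹ = σ ∧ P (involutionDiagram σ)} :=
    fun σ hσ τ hτ => involutionDiagram_inj hσ.1 hτ.1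
  have injOn_words : Set.InjOn wordDiagram
      {w | w.length = n ∧ IsValid w ∧ openPoints w = [] ∧ P (wordDiagram w)} :=
    fun w hw w' hw' => wordDiagram_inj (hw.1.trans hw'.1.symm) hw.2.1 hw'.2.1
  rw [← injOn_words.ncard_image, image_wordDiagram, ← image_involutionDiagram,
    injOn_involutions.ncard_image]
  rfl

end InvolutionDiagram

section Patterns

variable {n k : ℕ} {π : Equiv.Perm (Fin n)} {p : Equiv.Perm (Fin k)}

theorem contains_iff_strictMono (hp : Function.Involutive p) :
    Contains π p ↔ ∃ f : Fin k → Fin n, StrictMono f ∧ StrictMono fun v => π (f (p v)) := by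
  refine exists_congr fun f => and_congr_right fun _ => ⟨fun h v w hvw => ?_, fun h a b => ?_⟩
  · exact (h (p v) (p w)).1 (by rwa [hp v, hp w])
  · have := h.lt_iff_lt (a := p a) (b := p b)
    rwa [hp a, hp b, Iff.comm] at this

theorem contains_p4321_iff : Contains π p4321 ↔ ∃ i₁ i₂ i₃ i₄ : Fin n,
    (i₁ < i₂ ∧ i₂ < i₃ ∧ i₃ < i₄) ∧ π i₄ < π i₃ ∧ π i₃ < π i₂ ∧ π i₂ < π i₁ := by
  have involutive : Function.Involutive p4321 := by intro v; fin_cases v <;> rfl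
  rw [contains_iff_strictMono involutive]
  constructor
  · rintro ⟨f, hf, hπ⟩
    rw [Fin.strictMono_iff_lt_succ] at hf hπ
    exact ⟨f 0, f 1, f 2, f 3, ⟨hf 0, hf 1, hf 2⟩, hπ 0, hπ 1, hπ 2⟩
  · rintro ⟨i₁, i₂, i₃, i₄, hi, hπ⟩
    refine ⟨![i₁, i₂, i₃, i₄], ?_, ?_⟩
    · simp [Fin.strictMono_iff_lt_succ, Fin.forall_fin_succ, hi]
    · simp [Fin.strictMono_iff_lt_succ, Fin.forall_fin_succ, p4321, hπ]

theorem contains_p4231_iff : Contains π p4231 ↔ ∃ i₁ i₂ i₃ i₄ : Fin n,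
    (i₁ < i₂ ∧ i₂ < i₃ ∧ i₃ < i₄) ∧ π i₄ < π i₂ ∧ π i₂ < π i₃ ∧ π i₃ < π i₁ := by
  have involutive : Function.Involutive p4231 := by intro v; fin_cases v <;> rfl
  rw [contains_iff_strictMono involutive]
  constructor
  · rintro ⟨f, hf, hπ⟩
    rw [Fin.strictMono_iff_lt_succ] at hf hπ
    exact ⟨f 0, f 1, f 2, f 3, ⟨hf 0, hf 1, hf 2⟩, hπ 0, hπ 1, hπ 2⟩
  · rintro ⟨i₁, i₂, i₃, i₄, hi, hπ⟩
    refine ⟨![i₁, i₂, i₃, i₄], ?_, ?_⟩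
    · simp [Fin.strictMono_iff_lt_succ, Fin.forall_fin_succ, hi]
    · simp [Fin.strictMono_iff_lt_succ, Fin.forall_fin_succ, p4231, hπ]

/-- The reverse complement of a permutation: its diagram turned by 180 degrees. -/
def reverseComplement (π : Equiv.Perm (Fin n)) : Equiv.Perm (Fin n) :=
  Fin.revPerm.permCongr π

theorem reverseComplement_apply (π : Equiv.Perm (Fin n)) (i : Fin n) :
    reverseComplement π i = (π i.rev).rev :=
  rfl

theorem reverseComplement_reverseComplement (π : Equiv.Perm (Fin n)) :
    reverseComplement (reverseComplement π) = π := by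
  ext i
  simp [reverseComplement_apply]

theorem inv_reverseComplement (π : Equiv.Perm (Fin n)) :
    (reverseComplement π)⁻¹ = reverseComplement π⁻¹ :=
  rfl

theorem Contains.reverseComplement (h : Contains π p) :
    Contains (reverseComplement π) (reverseComplement p) := by
  obtain ⟨f, hf, hπ⟩ := h
  refine ⟨fun a => (f a.rev).rev, fun a b hab => ?_, fun a b => ?_⟩
  · exact Fin.rev_lt_rev.2 (hf (Fin.rev_lt_rev.2 hab))
  · simp only [reverseComplement_apply, Fin.rev_rev, Fin.rev_lt_rev]
    exact hπ b.rev a.rev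

theorem contains_reverseComplement_iff :
    Contains (reverseComplement π) p ↔ Contains π (reverseComplement p) := by
  constructor <;> intro h <;>
    simpa only [reverseComplement_reverseComplement] using h.reverseComplement

theorem reverseComplement_p4231 : reverseComplement p4231 = p4231 := by
  ext i
  fin_cases i <;> rfl

theorem contains_reverseComplement_p5276143_iff : Contains π (reverseComplement p5276143) ↔
    ∃ i₁ i₂ i₃ i₄ i₅ i₆ i₇ : Fin n,
      (i₁ < i₂ ∧ i₂ < i₃ ∧ i₃ < i₄ ∧ i₄ < i₅ ∧ i₅ < i₆ ∧ i₆ < i₇) ∧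
      π i₅ < π i₄ ∧ π i₄ < π i₇ ∧ π i₇ < π i₂ ∧ π i₂ < π i₁ ∧ π i₁ < π i₆ ∧ π i₆ < π i₃ := by
  have involutive : Function.Involutive (reverseComplement p5276143) := by
    intro v; fin_cases v <;> rfl
  rw [contains_iff_strictMono involutive]
  constructor
  · rintro ⟨f, hf, hπ⟩
    rw [Fin.strictMono_iff_lt_succ] at hf hπ
    exact ⟨f 0, f 1, f 2, f 3, f 4, f 5, f 6, ⟨hf 0, hf 1, hf 2, hf 3, hf 4, hf 5⟩,
      hπ 0, hπ 1, hπ 2, hπ 3, hπ 4, hπ 5⟩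
  · rintro ⟨i₁, i₂, i₃, i₄, i₅, i₆, i₇, hi, hπ⟩
    refine ⟨![i₁, i₂, i₃, i₄, i₅, i₆, i₇], ?_, ?_⟩
    · simp [Fin.strictMono_iff_lt_succ, Fin.forall_fin_succ, hi]
    · simp [Fin.strictMono_iff_lt_succ, Fin.forall_fin_succ, reverseComplement_apply, p5276143, hπ]

end Patterns

section InvolutionPatterns

open ArcDiagram

variable {n : ℕ} {σ : Equiv.Perm (Fin n)}

theorem extendsPast_involutionDiagram {a y : ℕ} :
    (involutionDiagram σ).ExtendsPast a y ↔ ∃ i : Fin n, i ≤ σ i ∧ a = i ∧ y < σ i := by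
  constructor
  · rintro (h | ⟨b, ⟨i, hi, rfl, rfl⟩, hy⟩)
    exacts [h.elim, ⟨i, hi, rfl, hy⟩]
  · rintro ⟨i, hi, rfl, hy⟩
    exact .inr ⟨σ i, ⟨i, hi, rfl, rfl⟩, hy⟩

theorem hasNestedArcs_involutionDiagram : (involutionDiagram σ).HasNestedArcs ↔
    ∃ a x : Fin n, a < x ∧ x < σ x ∧ σ x < σ a := by
  simp only [HasNestedArcs, extendsPast_involutionDiagram]
  constructor
  · rintro ⟨_, _, _, hax, hxy, ⟨x, -, rfl, rfl⟩, ⟨a, -, rfl, hya⟩⟩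
    exact ⟨a, x, hax, hxy, hya⟩
  · rintro ⟨a, x, hax, hx, hxa⟩
    exact ⟨a, x, σ x, hax, hx, ⟨x, hx.le, rfl, rfl⟩, a, by order, rfl, hxa⟩

theorem hasCoveredPair_involutionDiagram : (involutionDiagram σ).HasCoveredPair ↔
    ∃ o x u : Fin n, o < x ∧ x < u ∧ x ≤ σ x ∧ u ≤ σ u ∧ σ x < σ u ∧ σ u < σ o := by
  simp only [HasCoveredPair, extendsPast_involutionDiagram]
  constructor
  · rintro ⟨_, _, _, _, _, hox, hxu, hyz, ⟨x, hx, rfl, rfl⟩, ⟨u, hu, rfl, rfl⟩, o, -, rfl, ho⟩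
    exact ⟨o, x, u, hox, hxu, hx, hu, hyz, ho⟩
  · rintro ⟨o, x, u, hox, hxu, hx, hu, hyz, ho⟩
    exact ⟨o, x, σ x, u, σ u, hox, hxu, hyz, ⟨x, hx, rfl, rfl⟩, ⟨u, hu, rfl, rfl⟩,
      o, by order, rfl, ho⟩

theorem hasLinkedNestings_involutionDiagram : (involutionDiagram σ).HasLinkedNestings ↔
    ∃ a x c u : Fin n, a < x ∧ x < c ∧ c < σ x ∧ σ x < u ∧ u ≤ σ u ∧ σ x < σ a ∧ σ u < σ c := by
  simp only [HasLinkedNestings, extendsPast_involutionDiagram]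
  constructor
  · rintro ⟨_, _, _, _, _, _, hax, hxc, hcy, hyu, ⟨x, -, rfl, rfl⟩, ⟨a, -, rfl, ha⟩,
      ⟨u, hu, rfl, rfl⟩, c, -, rfl, hc⟩
    exact ⟨a, x, c, u, hax, hxc, hcy, hyu, hu, ha, hc⟩
  · rintro ⟨a, x, c, u, hax, hxc, hcy, hyu, hu, ha, hc⟩
    exact ⟨a, x, c, σ x, u, σ u, hax, hxc, hcy, hyu, ⟨x, by order, rfl, rfl⟩,
      ⟨a, by order, rfl, ha⟩, ⟨u, hu, rfl, rfl⟩, c, by order, rfl, hc⟩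

theorem contains_p4321_iff_hasNestedArcs (hσ : σ⁻¹ = σ) :
    Contains σ p4321 ↔ (involutionDiagram σ).HasNestedArcs := by
  have apply_apply := apply_apply_of_inv_eq hσ
  rw [contains_p4321_iff, hasNestedArcs_involutionDiagram]
  constructor
  · rintro ⟨i₁, i₂, i₃, i₄, ⟨h₁₂, h₂₃, h₃₄⟩, h₄₃, h₃₂, h₂₁⟩
    rcases lt_or_ge i₂ (σ i₂) with h | h
    · exact ⟨i₁, i₂, h₁₂, h, h₂₁⟩
    · refine ⟨σ i₄, σ i₃, h₄₃, ?_, ?_⟩ <;> simp only [apply_apply] <;> order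
  · rintro ⟨a, x, hax, hx, hxa⟩
    refine ⟨a, x, σ x, σ a, ⟨hax, hx, hxa⟩, ?_⟩
    simpa only [apply_apply] using ⟨hax, hx, hxa⟩

theorem hasCoveredPair_of_lt (hσ : σ⁻¹ = σ) (o i j : Fin n)
    (h : (i < j ∧ σ i < σ j) ∧ (o < i ∧ o < σ i) ∧ j < σ o ∧ σ j < σ o) :
    (involutionDiagram σ).HasCoveredPair := by
  have apply_apply := apply_apply_of_inv_eq hσ
  rw [hasCoveredPair_involutionDiagram]
  rcases le_total i (σ i) with hi | hi <;> rcases le_total j (σ j) with hj | hj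
  · exact ⟨o, i, j, by grind⟩
  · exact ⟨o, i, σ j, by grind⟩
  · exact ⟨o, σ i, j, by grind⟩
  · exact ⟨o, σ i, σ j, by grind⟩

theorem not_isAdmissible_of_4231_of_lt (hσ : σ⁻¹ = σ) {i₁ i₂ i₃ i₄ : Fin n}
    (hi : i₁ < i₂ ∧ i₂ < i₃ ∧ i₃ < i₄) (hv : σ i₄ < σ i₂ ∧ σ i₂ < σ i₃ ∧ σ i₃ < σ i₁)
    (hlt : i₁ < σ i₄ ∧ σ i₁ < i₄) : ¬ (involutionDiagram σ).IsAdmissible := by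
  have apply_apply := apply_apply_of_inv_eq hσ
  rintro ⟨hcovered, hlinked⟩
  have h₁ : ¬ i₃ < σ i₁ := fun h => hcovered (hasCoveredPair_of_lt hσ i₁ i₂ i₃ (by grind))
  have h₄ : ¬ σ i₄ < i₂ := fun h => hcovered (hasCoveredPair_of_lt hσ (σ i₄) i₂ i₃ (by grind))
  exact hlinked (hasLinkedNestings_involutionDiagram.2 ⟨i₁, i₂, σ i₄, σ i₃, by grind⟩)

theorem not_isAdmissible_of_contains_p4231 (hσ : σ⁻¹ = σ) (h : Contains σ p4231) :
    ¬ (involutionDiagram σ).IsAdmissible := by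
  have apply_apply := apply_apply_of_inv_eq hσ
  obtain ⟨i₁, i₂, i₃, i₄, hi, hv⟩ := contains_p4231_iff.1 h
  intro hadm
  have h₁ : ¬ (i₁ ≤ σ i₄ ∧ i₄ ≤ σ i₁) :=
    fun h => hadm.1 (hasCoveredPair_of_lt hσ i₁ i₂ i₃ (by grind))
  have h₄ : ¬ (σ i₄ ≤ i₁ ∧ σ i₁ ≤ i₄) :=
    fun h => hadm.1 (hasCoveredPair_of_lt hσ (σ i₄) i₂ i₃ (by grind))
  have hlt : ¬ (i₁ < σ i₄ ∧ σ i₁ < i₄) := fun h => not_isAdmissible_of_4231_of_lt hσ hi hv h hadm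
  have hgt : ¬ (σ i₄ < i₁ ∧ i₄ < σ i₁) := fun h =>
    not_isAdmissible_of_4231_of_lt hσ hv (by simpa only [apply_apply] using hi)
      (by simpa only [apply_apply] using h) hadm
  grind

theorem not_isAdmissible_of_5472163_of_le (hσ : σ⁻¹ = σ) {i₁ i₂ i₃ i₄ i₅ i₆ i₇ : Fin n}
    (hi : i₁ < i₂ ∧ i₂ < i₃ ∧ i₃ < i₄ ∧ i₄ < i₅ ∧ i₅ < i₆ ∧ i₆ < i₇)
    (hv : σ i₅ < σ i₄ ∧ σ i₄ < σ i₇ ∧ σ i₇ < σ i₂ ∧ σ i₂ < σ i₁ ∧ σ i₁ < σ i₆ ∧ σ i₆ < σ i₃)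
    (hle : σ i₇ ≤ i₃) : ¬ (involutionDiagram σ).IsAdmissible := by
  have apply_apply := apply_apply_of_inv_eq hσ
  rintro ⟨hcovered, hlinked⟩
  rw [hasLinkedNestings_involutionDiagram] at hlinked
  have h₁ : σ i₆ < i₇ := by
    by_contra h
    exact hlinked ⟨σ i₅, σ i₄, i₃, i₆, by grind⟩
  have h₂ : σ i₆ ≤ i₄ := by
    by_contra! h
    rcases le_total i₆ (σ i₆) with h₆ | h₆
    · exact hlinked ⟨σ i₅, σ i₄, σ i₇, i₆, by grind⟩
    · exact hlinked ⟨σ i₅, σ i₄, σ i₇, σ i₆, by grind⟩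
  have h₃ : i₂ ≤ σ i₇ := by
    by_contra! h
    exact hcovered (hasCoveredPair_of_lt hσ (σ i₇) i₂ i₆ (by grind))
  exact hlinked ⟨i₁, i₂, σ i₇, σ i₆, by grind⟩

theorem not_isAdmissible_of_contains_reverseComplement_p5276143 (hσ : σ⁻¹ = σ)
    (h : Contains σ (reverseComplement p5276143)) : ¬ (involutionDiagram σ).IsAdmissible := by
  have apply_apply := apply_apply_of_inv_eq hσ
  obtain ⟨i₁, i₂, i₃, i₄, i₅, i₆, i₇, hi, hv⟩ := contains_reverseComplement_p5276143_iff.1 h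
  rcases le_total (σ i₇) i₃ with hle | hle
  · exact not_isAdmissible_of_5472163_of_le hσ hi hv hle
  · exact not_isAdmissible_of_5472163_of_le hσ hv (by simpa only [apply_apply] using hi)
      (by simpa only [apply_apply] using hle)

theorem contains_p4231_of_hasCoveredPair (hσ : σ⁻¹ = σ)
    (h : (involutionDiagram σ).HasCoveredPair) : Contains σ p4231 := by
  have apply_apply := apply_apply_of_inv_eq hσ
  obtain ⟨o, x, u, hox, hxu, hx, hu, hxu', huo⟩ := hasCoveredPair_involutionDiagram.1 h
  exact contains_p4231_iff.2 ⟨o, x, u, σ o, by grind⟩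

theorem contains_of_hasLinkedNestings (hσ : σ⁻¹ = σ)
    (h : (involutionDiagram σ).HasLinkedNestings) :
    Contains σ p4231 ∨ Contains σ (reverseComplement p5276143) := by
  have apply_apply := apply_apply_of_inv_eq hσ
  obtain ⟨a, x, c, u, hax, hxc, hcx, hxu, hu, hxa, huc⟩ := hasLinkedNestings_involutionDiagram.1 h
  rw [contains_p4231_iff, contains_reverseComplement_p5276143_iff]
  rcases lt_or_ge (σ u) (σ a) with hua | hau
  · exact .inl ⟨a, x, u, σ a, by grind⟩
  rcases lt_or_ge u (σ a) with hua | hau'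
  · exact .inl ⟨a, x, σ u, σ c, by grind⟩
  · exact .inr ⟨a, x, c, σ x, σ a, σ u, σ c, by grind⟩

theorem isAdmissible_involutionDiagram_iff (hσ : σ⁻¹ = σ) : (involutionDiagram σ).IsAdmissible ↔
    Avoids σ p4231 ∧ Avoids σ (reverseComplement p5276143) := by
  refine ⟨fun hadm => ⟨fun h => not_isAdmissible_of_contains_p4231 hσ h hadm, fun h =>
    not_isAdmissible_of_contains_reverseComplement_p5276143 hσ h hadm⟩, ?_⟩
  rintro ⟨h4231, h5472163⟩
  exact ⟨fun h => h4231 (contains_p4231_of_hasCoveredPair hσ h),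
    fun h => (contains_of_hasLinkedNestings hσ h).elim h4231 h5472163⟩

end InvolutionPatterns

theorem card_involutions_avoiding_p4321 (n : ℕ) :
    Nat.card {σ : Equiv.Perm (Fin n) // σ⁻¹ = σ ∧ Avoids σ p4321} = motzkin n := by
  rw [← ncard_closed_words_not_hasNestedArcs, ← card_involutions_eq_ncard_words (¬ ·.HasNestedArcs)]
  refine Nat.card_congr (Equiv.subtypeEquivRight fun σ => and_congr_right fun hσ => ?_)
  exact not_congr (contains_p4321_iff_hasNestedArcs hσ)

theorem card_involutions_avoiding_p4231_p5276143 (n : ℕ) :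
    Nat.card {σ : Equiv.Perm (Fin n) // σ⁻¹ = σ ∧ Avoids σ p4231 ∧ Avoids σ p5276143} =
      motzkin n := by
  rw [← ncard_closed_words_isAdmissible, ← card_involutions_eq_ncard_words (·.IsAdmissible)]
  have involutive : Function.Involutive (reverseComplement (n := n)) :=
    reverseComplement_reverseComplement
  refine Nat.card_congr (involutive.toPerm.subtypeEquiv fun σ => ?_)
  rw [Function.Involutive.coe_toPerm, inv_reverseComplement, involutive.injective.eq_iff]
  refine and_congr_right fun hσ => ?_
  have inv_reverse : (reverseComplement σ)⁻¹ = reverseComplement σ := by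
    rw [inv_reverseComplement, hσ]
  rw [isAdmissible_involutionDiagram_iff inv_reverse, Avoids, Avoids, Avoids, Avoids,
    contains_reverseComplement_iff, contains_reverseComplement_iff, reverseComplement_p4231,
    reverseComplement_reverseComplement]

theorem involutions_wilf_equiv_4231_5276143_and_4321 (n : ℕ) :
    Nat.card {σ : Equiv.Perm (Fin n) //
        σ⁻¹ = σ ∧ Avoids σ p4231 ∧ Avoids σ p5276143} =
      Nat.card {σ : Equiv.Perm (Fin n) // σ⁻¹ = σ ∧ Avoids σ p4321} :=
  (card_involutions_avoiding_p4231_p5276143 n).trans (card_involutions_avoiding_p4321 n).symm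
end

section
/- For every natural number n, the number of involutions of length n avoiding both of the patterns 4231 and 5276143 equals the n-th Motzkin number, i.e., equals the sum over k from 0 to ⌊n/2⌋ of binomial(n, 2k) times the k-th Catalan number. -/
/-!
Draw an involution `σ` as arcs joining `i` and `σ i`. Its outer arcs start at the left-to-right
maxima with `i < σ i` (the openers) and end at the closers; no outer arc lies under another, so the
openers are matched with the closers in increasing order. Writing `U` at each opener, `D` at each
closer and a blank elsewhere gives a Motzkin word. Of the remaining arcs all that is known is that
each lies under an outer arc. Avoiding 4231 and 5276143 means exactly that they form the greedy
matching: scanning from the left, each free inner point is joined to the largest free inner point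
lying with it under an outer arc, and is left fixed if there is none to its right. Hence the word
determines the involution, and every Motzkin word occurs.
-/

open Function Set

section GreedyMatching

variable {α : Type*} [LinearOrder α] {G : α → α → Prop} {R : Set α} {μ ν : α → α}

/-- `μ` restricts to the greedy matching of the graph `G` on the vertex set `R`, unmatched vertices
being fixed points. Greediness is encoded as a stability condition: a neighbour `y` of `x` that is
larger than the partner of `x` has a partner smaller than `x`, so it was taken before `x` was
served. -/
structure IsGreedyMatching (G : α → α → Prop) (R : Set α) (μ : α → α) : Prop where
  mapsTo : MapsTo μ R R
  apply_apply : ∀ x ∈ R, μ (μ x) = x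
  adj : ∀ x ∈ R, μ x ≠ x → G x (μ x)
  apply_lt : ∀ x ∈ R, ∀ y ∈ R, x ≤ μ x → μ x < y → G x y → μ y < x

namespace IsGreedyMatching

theorem congr (hμ : IsGreedyMatching G R μ) (h : EqOn μ ν R) : IsGreedyMatching G R ν where
  mapsTo := hμ.mapsTo.congr h
  apply_apply x hx := by rw [← h hx, ← h (hμ.mapsTo hx), hμ.apply_apply x hx]
  adj x hx := by rw [← h hx]; exact hμ.adj x hx
  apply_lt x hx y hy := by rw [← h hx, ← h hy]; exact hμ.apply_lt x hx y hy

theorem not_apply_lt_of_eqOn_Iio (hμ : IsGreedyMatching G R μ) (hν : IsGreedyMatching G R ν)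
    {z : α} (hz : z ∈ R) (h : ∀ y ∈ R, y < z → μ y = ν y) : ¬ μ z < ν z := by
  intro hlt
  have hzμ : z ≤ μ z := by
    by_contra! hμz
    have : z = ν (μ z) := by rw [← h _ (hμ.mapsTo hz) hμz, hμ.apply_apply z hz]
    apply hlt.ne
    nth_rw 2 [this]
    rw [hν.apply_apply _ (hμ.mapsTo hz)]
  have hνz : ν z ∈ R := hν.mapsTo hz
  have hlt' : μ (ν z) < z :=
    hμ.apply_lt z hz _ hνz hzμ hlt (hν.adj z hz (hzμ.trans_lt hlt).ne')
  have hw : μ (ν z) ∈ R := hμ.mapsTo hνz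
  have : ν (μ (ν z)) = ν z := by rw [← h _ hw hlt', hμ.apply_apply _ hνz]
  apply hlt'.ne
  rw [← hν.apply_apply _ hw, this, hν.apply_apply z hz]

theorem eqOn [WellFoundedLT α] (hμ : IsGreedyMatching G R μ) (hν : IsGreedyMatching G R ν) :
    EqOn μ ν R := by
  intro z
  induction z using WellFoundedLT.induction with
  | ind z ih =>
    intro hz
    have hlt := hμ.not_apply_lt_of_eqOn_Iio hν hz fun y hy hyz => ih y hyz hy
    have hgt := hν.not_apply_lt_of_eqOn_Iio hμ hz fun y hy hyz => (ih y hyz hy).symm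
    exact le_antisymm (not_lt.1 hgt) (not_lt.1 hlt)

/-- The left endpoint of the arc of `z` would rather be joined to `y` or to `μ w`. The case `y = w`
will exclude 4231, the case `y ≠ w` will exclude 5276143. -/
theorem not_adj_of_lt (hμ : IsGreedyMatching G R μ) {z y w : α} (hz : z ∈ R) (hy : y ∈ R)
    (hw : w ∈ R) (hzy : z < y) (hμzy : μ z < μ y) (hzw : z < w) (hμzw : μ z < μ w)
    (hG : G (μ z) y) : ¬ G z (μ w) := by
  intro hG'
  rcases le_total z (μ z) with h | h
  · have := hμ.apply_lt z hz _ (hμ.mapsTo hw) h hμzw hG'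
    rw [hμ.apply_apply w hw] at this
    exact this.asymm hzw
  · have hzz := hμ.apply_apply z hz
    exact (hμ.apply_lt _ (hμ.mapsTo hz) y hy (by rwa [hzz]) (by rwa [hzz]) hG).asymm hμzy

/-- The recursive step of the greedy algorithm: `z` is served first and receives `g`. -/
theorem of_isLeast {z g : α} (hGsymm : ∀ x y, G x y → G y x) (hz : IsLeast R z)
    (hg : IsGreatest {y ∈ R | y = z ∨ G z y} g) (μ_z : μ z = g) (μ_g : μ g = z)
    (hμ : IsGreedyMatching G (R \ {z, g}) μ) : IsGreedyMatching G R μ := by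
  have mem_rest {x : α} (hx : x ∈ R) (hxz : x ≠ z) (hxg : x ≠ g) : x ∈ R \ {z, g} :=
    ⟨hx, by simp [hxz, hxg]⟩
  have cases_mem {x : α} (hx : x ∈ R) : x = z ∨ x = g ∨ x ∈ R \ {z, g} := by
    have := mem_rest hx
    tauto
  constructor
  · intro x hx
    rcases cases_mem hx with rfl | rfl | hx
    · rw [μ_z]; exact hg.1.1
    · rw [μ_g]; exact hz.1
    · exact (hμ.mapsTo hx).1
  · intro x hx
    rcases cases_mem hx with rfl | rfl | hx
    · rw [μ_z, μ_g]
    · rw [μ_g, μ_z]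
    · exact hμ.apply_apply x hx
  · intro x hx hne
    rcases cases_mem hx with rfl | rfl | hx
    · rw [μ_z] at hne ⊢; exact hg.1.2.resolve_left hne
    · rw [μ_g] at hne ⊢; exact hGsymm _ _ (hg.1.2.resolve_left hne.symm)
    · exact hμ.adj x hx hne
  · intro x hx y hy hle hlt hG
    have hxz : x ≠ z := by
      rintro rfl
      rw [μ_z] at hlt
      exact hlt.not_ge (hg.2 ⟨hy, Or.inr hG⟩)
    have hxg : x ≠ g := by
      rintro rfl
      rw [μ_g] at hle
      exact hxz (hle.antisymm (hz.2 hx))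
    have hyz : y ≠ z := fun h => (hle.trans_lt hlt).not_ge (h ▸ hz.2 hx)
    rcases eq_or_ne y g with rfl | hyg
    · rw [μ_g]; exact lt_of_le_of_ne (hz.2 hx) hxz.symm
    · exact hμ.apply_lt x (mem_rest hx hxz hxg) y (mem_rest hy hyz hyg) hle hlt hG

end IsGreedyMatching

theorem exists_isGreedyMatching (hGsymm : ∀ x y, G x y → G y x) (hR : R.Finite) :
    ∃ μ, IsGreedyMatching G R μ := by
  classical
  lift R to Finset α using hR
  induction R using Finset.strongInduction with
  | H R ih =>
    rcases R.eq_empty_or_nonempty with rfl | hR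
    · exact ⟨id, by constructor <;> simp⟩
    have hz := R.isLeast_min' hR
    set z := R.min' hR
    have hS : (R.filter fun y => y = z ∨ G z y).Nonempty := ⟨z, by simpa using hz.1⟩
    have hg := Finset.isGreatest_max' _ hS
    rw [Finset.coe_filter] at hg
    set g := Finset.max' _ hS
    obtain ⟨μ, hμ⟩ := ih ((R.erase z).erase g)
      ((Finset.erase_subset _ _).trans_ssubset (Finset.erase_ssubset hz.1))
    rw [Finset.coe_erase, Finset.coe_erase, sdiff_sdiff, singleton_union] at hμ
    refine ⟨update (update μ z g) g z, .of_isLeast hGsymm hz hg ?_ (update_self ..)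
      (hμ.congr fun x hx => ?_)⟩
    · rw [update_apply, update_self]
      exact ite_eq_right_iff.2 id
    · obtain ⟨-, hx⟩ := hx
      simp only [mem_insert_iff, mem_singleton_iff, not_or] at hx
      rw [update_of_ne hx.2, update_of_ne hx.1]

end GreedyMatching

section OuterArcs

variable {α : Type*} [LinearOrder α] {σ τ : α → α} {O : Set α}

/-- The left endpoints of the outer arcs of `σ`: the left-to-right maxima that are strict
excedances. -/
def openers (σ : α → α) : Set α := {i | i < σ i ∧ ∀ j < i, σ j < σ i}

/-- The right endpoints of the outer arcs of an involution `σ`. -/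
def closers (σ : α → α) : Set α := σ ⁻¹' openers σ

/-- The points that are not endpoints of an outer arc. -/
def innerPoints (σ : α → α) : Set α := (openers σ ∪ closers σ)ᶜ

/-- `x` and `y` lie under a common arc of `σ` with left endpoint in `O`. The set `O` is kept apart
from `openers σ` so that the relation makes sense while `σ` is still under construction. -/
def Linked (O : Set α) (σ : α → α) (x y : α) : Prop :=
  ∃ a ∈ O, x ∈ Ioo a (σ a) ∧ y ∈ Ioo a (σ a)

/-- The inner arcs of `σ` form the greedy matching among the pairs of inner points that lie under a
common outer arc. -/
def HasGreedyInterior (σ : α → α) : Prop :=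
  IsGreedyMatching (Linked (openers σ) σ) (innerPoints σ) σ

theorem Linked.symm {x y : α} : Linked O σ x y → Linked O σ y x :=
  fun ⟨a, ha, hx, hy⟩ => ⟨a, ha, hy, hx⟩

theorem linked_congr (h : EqOn σ τ O) : Linked O σ = Linked O τ := by
  ext x y
  exact exists_congr fun a => and_congr_right fun ha => by rw [h ha]

theorem strictMonoOn_openers : StrictMonoOn σ (openers σ) := fun _ _ _ hj hij => hj.2 _ hij

theorem disjoint_openers_closers (hσ : Involutive σ) : Disjoint (openers σ) (closers σ) :=
  disjoint_left.2 fun i hi hi' => hi.1.asymm (by simpa only [hσ i] using hi'.1)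

theorem apply_mem_openers_iff {i : α} : σ i ∈ openers σ ↔ i ∈ closers σ := Iff.rfl

theorem apply_mem_closers_iff (hσ : Involutive σ) {i : α} : σ i ∈ closers σ ↔ i ∈ openers σ := by
  rw [closers, mem_preimage, hσ i]

theorem image_openers (hσ : Involutive σ) : σ '' openers σ = closers σ :=
  congrFun (image_eq_preimage_of_inverse hσ hσ) _

theorem mapsTo_innerPoints (hσ : Involutive σ) : MapsTo σ (innerPoints σ) (innerPoints σ) :=
  fun _ hi h => hi (h.symm.imp (apply_mem_closers_iff hσ).1 apply_mem_openers_iff.1)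

theorem openers_eq_of_strictMonoOn (hmono : StrictMonoOn σ O) (hlt : ∀ a ∈ O, a < σ a)
    (hcover : ∀ i ∉ O, i < σ i → ∃ a ∈ O, a < i ∧ σ i < σ a) : openers σ = O := by
  refine Subset.antisymm (fun i hi => ?_) fun i hi => ⟨hlt i hi, fun j hji => ?_⟩
  · by_contra hiO
    obtain ⟨a, -, hai, hia⟩ := hcover i hiO hi.1
    exact hia.asymm (hi.2 a hai)
  · rcases le_or_gt (σ j) j with hj | hj
    · exact (hj.trans_lt hji).trans (hlt i hi)
    by_cases hjO : j ∈ O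
    · exact hmono hjO hi hji
    obtain ⟨a, haO, haj, hja⟩ := hcover j hjO hj
    exact hja.trans (hmono haO hi (haj.trans hji))

section WellFounded

variable [WellFoundedLT α]

theorem exists_opener_le_of_inversion (hσ : Involutive σ) {p q : α} (hpq : p < q)
    (hqp : σ q < σ p) : ∃ l ∈ openers σ, l ≤ p ∧ σ p ≤ σ l := by
  obtain ⟨l, hl, hmin⟩ := WellFounded.has_min wellFounded_lt {j | σ p ≤ σ j} ⟨p, le_rfl⟩
  have hlp : l ≤ p := not_lt.1 (hmin p le_rfl)
  have lt_of_lt {j : α} (hj : j < l) : σ j < σ p := not_le.1 fun h => hmin j h hj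
  refine ⟨l, ⟨?_, fun j hj => (lt_of_lt hj).trans_le hl⟩, hlp, hl⟩
  by_contra! hσl
  have hql : σ q < l := hqp.trans_le (hl.trans hσl)
  have := lt_of_lt hql
  rw [hσ q] at this
  exact this.not_ge ((hl.trans hσl).trans (hlp.trans hpq.le))

theorem exists_opener_ge_of_inversion (hσ : Involutive σ) {p q : α} (hpq : p < q)
    (hqp : σ q < σ p) : ∃ r ∈ openers σ, r ≤ σ q ∧ q ≤ σ r := by
  simpa only [hσ q] using exists_opener_le_of_inversion hσ hqp (by rwa [hσ, hσ])

theorem linked_of_inversion (hσ : Involutive σ) {p q x v : α} (hqp : σ q < σ p)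
    (hx : x ∈ Ioo p q) (hv : v ∈ Ioo (σ q) (σ p)) : Linked (openers σ) σ x v := by
  have hpq : p < q := hx.1.trans hx.2
  rcases le_total x v with h | h
  · obtain ⟨l, hl, hlp, hpl⟩ := exists_opener_le_of_inversion hσ hpq hqp
    have hlx : l < x := hlp.trans_lt hx.1
    have hvl : v < σ l := hv.2.trans_le hpl
    exact ⟨l, hl, ⟨hlx, h.trans_lt hvl⟩, ⟨hlx.trans_le h, hvl⟩⟩
  · obtain ⟨r, hr, hrq, hqr⟩ := exists_opener_ge_of_inversion hσ hpq hqp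
    have hrv : r < v := hrq.trans_lt hv.1
    have hxr : x < σ r := hx.2.trans_le hqr
    exact ⟨r, hr, ⟨hrv.trans_le h, hxr⟩, ⟨hrv, h.trans_lt hxr⟩⟩

theorem exists_opener_cover_of_lt (hσ : Involutive σ) {i : α} (hi : i ∈ innerPoints σ)
    (hlt : i < σ i) : ∃ a ∈ openers σ, a < i ∧ σ i < σ a := by
  obtain ⟨a, ha, hai, hia⟩ := exists_opener_le_of_inversion hσ hlt (by rwa [hσ])
  have hne : a ≠ i := fun h => hi (Or.inl (h ▸ ha))
  exact ⟨a, ha, hai.lt_of_ne hne, hia.lt_of_ne fun h => hne (hσ.injective h.symm)⟩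

theorem linked_apply (hσ : Involutive σ) {i : α} (hi : i ∈ innerPoints σ) (hne : σ i ≠ i) :
    Linked (openers σ) σ i (σ i) := by
  wlog hlt : i < σ i generalizing i
  · have := this (mapsTo_innerPoints hσ hi) (by rw [hσ]; exact hne.symm)
      (by rw [hσ]; exact lt_of_le_of_ne (not_lt.1 hlt) hne)
    rw [hσ] at this
    exact this.symm
  obtain ⟨a, ha, hai, hia⟩ := exists_opener_cover_of_lt hσ hi hlt
  exact ⟨a, ha, ⟨hai, hlt.trans hia⟩, ⟨hai.trans hlt, hia⟩⟩

theorem eqOn_of_strictMonoOn_of_image_eq {β : Type*} [PartialOrder β] {f g : α → β}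
    (hf : StrictMonoOn f O) (hg : StrictMonoOn g O) (h : f '' O = g '' O) : EqOn f g O := by
  rw [← domRestrict_eq_domRestrict_iff, ← hf.domRestrict.range_inj hg.domRestrict,
    range_domRestrict, range_domRestrict, h]

theorem eqOn_openers (hσ : Involutive σ) (hτ : Involutive τ) (hO : openers σ = openers τ)
    (hC : closers σ = closers τ) : EqOn σ τ (openers σ) := by
  refine eqOn_of_strictMonoOn_of_image_eq strictMonoOn_openers (hO ▸ strictMonoOn_openers) ?_
  rw [image_openers hσ, hC, hO, image_openers hτ]

theorem HasGreedyInterior.eq_of_openers_eq (hσ : Involutive σ) (hτ : Involutive τ)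
    (hσ' : HasGreedyInterior σ) (hτ' : HasGreedyInterior τ) (hO : openers σ = openers τ)
    (hC : closers σ = closers τ) : σ = τ := by
  have hopen := eqOn_openers hσ hτ hO hC
  funext i
  by_cases hi : i ∈ innerPoints σ
  · rw [HasGreedyInterior, innerPoints, ← hO, ← hC, ← linked_congr hopen] at hτ'
    exact IsGreedyMatching.eqOn hσ' hτ' hi
  rcases not_not.1 hi with hi | hi
  · exact hopen hi
  · rw [← hτ.eq_iff, ← hopen hi, hσ]

end WellFounded

end OuterArcs

section Patterns

variable {α : Type*} [LinearOrder α] {σ : α → α}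

/-- The map `σ` has an occurrence of the pattern 4231, for maps on an arbitrary linear order. -/
def Occurs4231 (σ : α → α) : Prop :=
  ∃ a b c d, a < b ∧ b < c ∧ c < d ∧ σ d < σ b ∧ σ b < σ c ∧ σ c < σ a

/-- The map `σ` has an occurrence of the pattern 5276143, for maps on an arbitrary linear order. -/
def Occurs5276143 (σ : α → α) : Prop :=
  ∃ a b c d e f g, a < b ∧ b < c ∧ c < d ∧ d < e ∧ e < f ∧ f < g ∧
    σ e < σ b ∧ σ b < σ g ∧ σ g < σ f ∧ σ f < σ a ∧ σ a < σ d ∧ σ d < σ c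

theorem mem_innerPoints_of_decreasing (hσ : Involutive σ) {p q r : α} (hpq : p < q) (hqr : q < r)
    (hqp : σ q < σ p) (hrq : σ r < σ q) : q ∈ innerPoints σ := by
  rintro (hq | hq)
  · exact hqp.asymm (hq.2 p hpq)
  · have := hq.2 _ hrq
    rw [hσ, hσ] at this
    exact this.asymm hqr

theorem HasGreedyInterior.not_occurs4231 [WellFoundedLT α] (hσ : Involutive σ)
    (h : HasGreedyInterior σ) : ¬ Occurs4231 σ := by
  rintro ⟨a, b, c, d, hab, hbc, hcd, hdb, hbc', hca⟩
  have hb : b ∈ innerPoints σ := mem_innerPoints_of_decreasing hσ hab (hbc.trans hcd)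
    (hbc'.trans hca) hdb
  have hc : c ∈ innerPoints σ := mem_innerPoints_of_decreasing hσ (hab.trans hbc) hcd hca
    (hdb.trans hbc')
  have hda : σ d < σ a := hdb.trans (hbc'.trans hca)
  have hcb : Linked (openers σ) σ c (σ b) :=
    linked_of_inversion hσ hda ⟨hab.trans hbc, hcd⟩ ⟨hdb, hbc'.trans hca⟩
  have hbc'' : Linked (openers σ) σ b (σ c) :=
    linked_of_inversion hσ hda ⟨hab, hbc.trans hcd⟩ ⟨hdb.trans hbc', hca⟩
  exact IsGreedyMatching.not_adj_of_lt h hb hc hc hbc hbc' hbc hbc' hcb.symm hbc''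

theorem HasGreedyInterior.not_occurs5276143 [WellFoundedLT α] (hσ : Involutive σ)
    (h : HasGreedyInterior σ) : ¬ Occurs5276143 σ := by
  rintro ⟨a, b, c, d, e, f, g, hab, hbc, hcd, hde, hef, hfg, heb, hbg, hgf, hfa, had, hdc⟩
  have hb : b ∈ innerPoints σ := mem_innerPoints_of_decreasing (p := a) (r := e) hσ
    (by order) (by order) (by order) (by order)
  have hd : d ∈ innerPoints σ := mem_innerPoints_of_decreasing (p := c) (r := e) hσ
    (by order) (by order) (by order) (by order)
  have hf : f ∈ innerPoints σ := mem_innerPoints_of_decreasing (p := a) (r := g) hσ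
    (by order) (by order) (by order) (by order)
  have hea : σ e < σ a := by order
  have hdb : Linked (openers σ) σ d (σ b) :=
    linked_of_inversion hσ hea ⟨by order, by order⟩ ⟨by order, by order⟩
  have hbf : Linked (openers σ) σ b (σ f) :=
    linked_of_inversion hσ hea ⟨by order, by order⟩ ⟨by order, by order⟩
  exact IsGreedyMatching.not_adj_of_lt h hb hd hf (by order) (by order) (by order) (by order)
    hdb.symm hbf

/-- A failure of greediness at `x` consists of two crossing arcs `x, σ x` and `y, σ y`, with `x` and
`y` under an outer arc `a, σ a`. Either that arc or another one reaching beyond `σ y` gives 4231,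
or the outer arc over `y, σ y` starts after `σ x` and completes 5276143. -/
theorem occurs4231_or_occurs5276143_of_crossing [WellFoundedLT α] (hσ : Involutive σ) {x y : α}
    (hx : x ∈ innerPoints σ) (hy : y ∈ innerPoints σ) (hxx : x ≤ σ x) (hxy : σ x < y)
    (hlink : Linked (openers σ) σ x y) (hxσy : x < σ y) : Occurs4231 σ ∨ Occurs5276143 σ := by
  by_contra! ⟨h4231, h5276143⟩
  obtain ⟨a, ha, ⟨hax, -⟩, ⟨-, hya⟩⟩ := hlink
  have not_between {r : α} (hrx : r < σ x) (hyr : σ y < σ r) : False := by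
    refine h4231 ⟨a, x, σ y, σ r, hax, hxσy, hyr, ?_⟩
    rw [hσ, hσ]
    exact ⟨hrx, hxy, hya⟩
  have hay : σ a < σ y := by
    refine lt_of_le_of_ne (not_lt.1 (not_between (hax.trans_le hxx))) fun h => ?_
    exact hy (Or.inl (hσ.injective h ▸ ha))
  obtain ⟨b, hb, hby, hyb⟩ := exists_opener_cover_of_lt hσ hy (hya.trans hay)
  have hxb : σ x < b := by
    refine lt_of_le_of_ne (not_lt.1 fun h => not_between h hyb) fun h => ?_
    exact hx (Or.inr (apply_mem_openers_iff.1 (h ▸ hb)))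
  refine h5276143 ⟨a, x, b, y, σ a, σ y, σ b, hax, hxx.trans_lt hxb, hby, hya, hay, hyb, ?_⟩
  rw [hσ, hσ, hσ]
  exact ⟨hax.trans_le hxx, hxb, hby, hya, hay, hyb⟩

theorem hasGreedyInterior_iff [WellFoundedLT α] (hσ : Involutive σ) :
    HasGreedyInterior σ ↔ ¬ Occurs4231 σ ∧ ¬ Occurs5276143 σ := by
  refine ⟨fun h => ⟨h.not_occurs4231 hσ, h.not_occurs5276143 hσ⟩, fun h => ?_⟩
  refine ⟨mapsTo_innerPoints hσ, fun i _ => hσ i, fun i => linked_apply hσ,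
    fun x hx y hy hxx hxy hlink => ?_⟩
  by_contra! hle
  have hne : x ≠ σ y := fun h => hxy.ne (by rw [h, hσ])
  exact not_or.2 h (occurs4231_or_occurs5276143_of_crossing hσ hx hy hxx hxy hlink
    (lt_of_le_of_ne hle hne))

variable {n k : ℕ} {π : Equiv.Perm (Fin n)}

theorem contains_of_strictMono {ρ : Equiv.Perm (Fin k)} {f g : Fin k → Fin n} (hf : StrictMono f)
    (hg : StrictMono g) (h : ∀ a, π (f a) = g (ρ a)) : Contains π ρ :=
  ⟨f, hf, fun a b => by rw [h, h, hg.lt_iff_lt]⟩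

theorem contains_p4231_iff_s2 : Contains π p4231 ↔ Occurs4231 π := by
  constructor
  · rintro ⟨f, hf, h⟩
    refine ⟨f 0, f 1, f 2, f 3, hf (by decide), hf (by decide), hf (by decide),
      (h _ _).1 ?_, (h _ _).1 ?_, (h _ _).1 ?_⟩ <;> simp [p4231]
  · rintro ⟨a, b, c, d, hab, hbc, hcd, hdb, hbc', hca⟩
    apply contains_of_strictMono (f := ![a, b, c, d]) (g := ![π d, π b, π c, π a])
    · rw [Fin.strictMono_iff_lt_succ]; intro i; fin_cases i <;> assumption
    · rw [Fin.strictMono_iff_lt_succ]; intro i; fin_cases i <;> assumption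
    · intro i; fin_cases i <;> simp [p4231]

theorem contains_p5276143_iff : Contains π p5276143 ↔ Occurs5276143 π := by
  constructor
  · rintro ⟨f, hf, h⟩
    refine ⟨f 0, f 1, f 2, f 3, f 4, f 5, f 6, hf (by decide), hf (by decide), hf (by decide),
      hf (by decide), hf (by decide), hf (by decide), (h _ _).1 ?_, (h _ _).1 ?_, (h _ _).1 ?_,
      (h _ _).1 ?_, (h _ _).1 ?_, (h _ _).1 ?_⟩ <;> simp [p5276143]
  · rintro ⟨a, b, c, d, e, f, g, hab, hbc, hcd, hde, hef, hfg, heb, hbg, hgf, hfa, had, hdc⟩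
    apply contains_of_strictMono (f := ![a, b, c, d, e, f, g])
      (g := ![π e, π b, π g, π f, π a, π d, π c])
    · rw [Fin.strictMono_iff_lt_succ]; intro i; fin_cases i <;> assumption
    · rw [Fin.strictMono_iff_lt_succ]; intro i; fin_cases i <;> assumption
    · intro i; fin_cases i <;> simp [p5276143]

theorem inv_eq_self_iff_involutive : π⁻¹ = π ↔ Involutive π := by
  rw [inv_eq_iff_mul_eq_one, Equiv.ext_iff]
  rfl

theorem inv_eq_and_avoids_iff :
    π⁻¹ = π ∧ Avoids π p4231 ∧ Avoids π p5276143 ↔ Involutive π ∧ HasGreedyInterior π := by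
  rw [inv_eq_self_iff_involutive, Avoids, Avoids, contains_p4231_iff_s2, contains_p5276143_iff]
  exact and_congr_right fun hπ => (hasGreedyInterior_iff hπ).symm

end Patterns

section Existence

variable {α : Type*}

theorem involutive_piecewise {s : Set α} [DecidablePred (· ∈ s)] {f g : α → α}
    (hfs : MapsTo f s s) (hgs : MapsTo g sᶜ sᶜ) (hf : ∀ x ∈ s, f (f x) = x)
    (hg : ∀ x ∉ s, g (g x) = x) : Involutive (s.piecewise f g) := by
  intro x
  by_cases hx : x ∈ s
  · rw [piecewise_eq_of_mem _ _ _ hx, piecewise_eq_of_mem _ _ _ (hfs hx), hf x hx]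
  · rw [piecewise_eq_of_notMem _ _ _ hx, piecewise_eq_of_notMem _ _ _ (hgs hx), hg x hx]

variable [LinearOrder α] {O C : Finset α}

theorem exists_involutive_strictMonoOn (hOC : Disjoint O C) (hcard : O.card = C.card) :
    ∃ τ : α → α, Involutive τ ∧ StrictMonoOn τ O ∧ ∀ i, τ i ∈ C ↔ i ∈ O := by
  let e : O ≃o C := (O.orderIsoOfFin rfl).symm.trans (C.orderIsoOfFin hcard.symm)
  let τ : α → α := fun i =>
    if hO : i ∈ O then e ⟨i, hO⟩ else if hC : i ∈ C then e.symm ⟨i, hC⟩ else i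
  have τ_opener (i : O) : τ i = e i := dif_pos i.2
  have τ_closer (i : C) : τ i = e.symm i := by
    simp only [τ, dif_neg (Finset.disjoint_right.1 hOC i.2), dif_pos i.2]
  have τ_other {i : α} (hO : i ∉ O) (hC : i ∉ C) : τ i = i := by
    simp only [τ, dif_neg hO, dif_neg hC]
  have cases_mem (i : α) : (∃ a : O, a = i) ∨ (∃ c : C, c = i) ∨ i ∉ O ∧ i ∉ C := by
    simp only [Subtype.exists, exists_prop, exists_eq_right]
    tauto
  refine ⟨τ, fun i => ?_, fun a ha b hb hab => ?_, fun i => ?_⟩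
  · obtain ⟨a, rfl⟩ | ⟨c, rfl⟩ | ⟨hO, hC⟩ := cases_mem i
    · rw [τ_opener, τ_closer, e.symm_apply_apply]
    · rw [τ_closer, τ_opener, e.apply_symm_apply]
    · rw [τ_other hO hC, τ_other hO hC]
  · rw [τ_opener ⟨a, ha⟩, τ_opener ⟨b, hb⟩]
    exact e.strictMono (Subtype.mk_lt_mk.2 hab)
  · obtain ⟨a, rfl⟩ | ⟨c, rfl⟩ | ⟨hO, hC⟩ := cases_mem i
    · simp only [τ_opener, Finset.coe_mem]
    · simp only [τ_closer, Finset.disjoint_left.1 hOC (e.symm c).2,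
        Finset.disjoint_right.1 hOC c.2]
    · simp only [τ_other hO hC, hO, hC]

theorem le_apply_of_ballot {f : α → α} (hmono : StrictMonoOn f O) (hf : MapsTo f O C)
    (hballot : ∀ i, (C.filter (· ≤ i)).card ≤ (O.filter (· ≤ i)).card) : ∀ a ∈ O, a ≤ f a := by
  intro a ha
  by_contra! hlt
  have hlt_card : (C.filter (· < f a)).card < (C.filter (· ≤ f a)).card :=
    Finset.card_lt_card <| Finset.ssubset_iff_of_subset
      (Finset.monotone_filter_right C fun _ _ => le_of_lt) |>.2 ⟨f a, by simpa using hf ha⟩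
  have hle_card : (O.filter (· ≤ f a)).card ≤ (C.filter (· < f a)).card := by
    refine Finset.card_le_card_of_injOn f (fun x hx => ?_)
      (hmono.injOn.mono (Finset.coe_subset.2 (Finset.filter_subset _ _)))
    simp only [Finset.coe_filter, mem_ofPred_eq] at hx ⊢
    exact ⟨hf hx.1, hmono hx.1 ha (hx.2.trans_lt hlt)⟩
  exact (hlt_card.trans_le (hballot (f a))).not_ge hle_card

theorem exists_hasGreedyInterior_of_strictMonoOn [Finite α] {O : Set α} {τ : α → α}
    (hτ : Involutive τ) (hmono : StrictMonoOn τ O) (hlt : ∀ a ∈ O, a < τ a) :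
    ∃ σ : α → α, Involutive σ ∧ HasGreedyInterior σ ∧ openers σ = O ∧ closers σ = τ ⁻¹' O := by
  classical
  set S : Set α := O ∪ τ ⁻¹' O
  obtain ⟨μ, hμ⟩ := exists_isGreedyMatching (G := Linked O τ) (fun _ _ => Linked.symm)
    (toFinite Sᶜ)
  let σ : α → α := S.piecewise τ μ
  have eqOn_outer : EqOn σ τ S := piecewise_eqOn S τ μ
  have eqOn_inner : EqOn σ μ Sᶜ := piecewise_eqOn_compl S τ μ
  have eqOn_O : EqOn σ τ O := eqOn_outer.mono subset_union_left
  have mapsTo_S : MapsTo τ S S := fun i hi =>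
    hi.symm.imp id fun hi => by rwa [mem_preimage, hτ]
  have hσ : Involutive σ :=
    involutive_piecewise mapsTo_S hμ.mapsTo (fun i _ => hτ i) hμ.apply_apply
  have hopen : openers σ = O := by
    refine openers_eq_of_strictMonoOn (hmono.congr eqOn_O.symm)
      (fun a ha => by rw [eqOn_O ha]; exact hlt a ha) fun i hiO hi_lt => ?_
    have hiS : i ∈ Sᶜ := by
      rintro (hi | hi)
      · exact hiO hi
      · rw [eqOn_outer (Or.inr hi)] at hi_lt
        exact hi_lt.asymm (by simpa only [hτ i] using hlt _ hi)
    rw [eqOn_inner hiS] at hi_lt ⊢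
    obtain ⟨a, ha, hai, hia⟩ := hμ.adj i hiS hi_lt.ne'
    exact ⟨a, ha, hai.1, by rw [eqOn_O ha]; exact hia.2⟩
  have hclose : closers σ = τ ⁻¹' O := by
    rw [← image_openers hσ, hopen, eqOn_O.image_eq, image_eq_preimage_of_inverse hτ hτ]
  refine ⟨σ, hσ, ?_, hopen, hclose⟩
  rw [HasGreedyInterior, innerPoints, hopen, hclose, linked_congr eqOn_O]
  exact hμ.congr eqOn_inner.symm

theorem exists_involutive_of_ballot [Finite α] (hOC : Disjoint O C) (hcard : O.card = C.card)
    (hballot : ∀ i, (C.filter (· ≤ i)).card ≤ (O.filter (· ≤ i)).card) :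
    ∃ σ : α → α, Involutive σ ∧ HasGreedyInterior σ ∧ openers σ = O ∧ closers σ = C := by
  obtain ⟨τ, hτ, hmono, hτC⟩ := exists_involutive_strictMonoOn hOC hcard
  have hpre : τ ⁻¹' O = C := ext fun i => by
    rw [mem_preimage, Finset.mem_coe, Finset.mem_coe, ← hτC, hτ]
  have hlt (a : α) (ha : a ∈ O) : a < τ a := by
    have hτa : τ a ∈ C := (hτC a).2 ha
    exact lt_of_le_of_ne (le_apply_of_ballot hmono (fun i => (hτC i).2) hballot a ha)
      fun h => Finset.disjoint_left.1 hOC ha (h ▸ hτa)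
  exact hpre ▸ exists_hasGreedyInterior_of_strictMonoOn hτ hmono hlt

end Existence

section MotzkinWords

/-- The lists of length `n` that become `d` when their blanks `none` are deleted. -/
def spellings {β : Type*} (n : ℕ) (d : List β) : Set (List (Option β)) :=
  {l | l.length = n ∧ l.reduceOption = d}

theorem spellings_zero_nil {β : Type*} : spellings 0 ([] : List β) = {[]} := by
  ext l
  simp +contextual [spellings, List.length_eq_zero_iff]

theorem spellings_zero_cons {β : Type*} (b : β) (d : List β) : spellings 0 (b :: d) = ∅ := by
  ext l
  simp +contextual [spellings, List.length_eq_zero_iff]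

theorem spellings_succ_nil {β : Type*} (n : ℕ) :
    spellings (n + 1) ([] : List β) = List.cons none '' spellings n [] := by
  ext (_ | ⟨_ | b, l⟩) <;>
    simp [spellings, List.reduceOption_cons_of_none, List.reduceOption_cons_of_some]

theorem spellings_succ_cons {β : Type*} (n : ℕ) (b : β) (d : List β) :
    spellings (n + 1) (b :: d) =
      List.cons none '' spellings n (b :: d) ∪ List.cons (some b) '' spellings n d := by
  ext (_ | ⟨_ | c, l⟩)
  · simp [spellings]
  · simp [spellings, List.reduceOption_cons_of_none]
  · simp [spellings, List.reduceOption_cons_of_some]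
    tauto

theorem encard_spellings {β : Type*} (n : ℕ) (d : List β) :
    (spellings n d).encard = n.choose d.length := by
  induction n generalizing d with
  | zero =>
    cases d with
    | nil => simp [spellings_zero_nil]
    | cons b d => simp [spellings_zero_cons]
  | succ n ih =>
    cases d with
    | nil =>
      rw [spellings_succ_nil, List.cons_injective.encard_image, ih]
      simp
    | cons b d =>
      have hdisj : Disjoint (List.cons none '' spellings n (b :: d))
          (List.cons (some b) '' spellings n d) := by
        rw [disjoint_left]
        rintro _ ⟨l, -, rfl⟩ ⟨l', -, h⟩
        simp at h
      rw [spellings_succ_cons, encard_union_eq hdisj, List.cons_injective.encard_image,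
        List.cons_injective.encard_image, ih, ih, List.length_cons, Nat.choose_succ_succ, add_comm,
        Nat.cast_add]

/-- Motzkin words of length `n`: words in up steps, down steps and level steps `none` that become
Dyck words when the level steps are deleted. -/
def motzkinWords (n : ℕ) : Set (List (Option DyckStep)) :=
  {l | l.length = n ∧ ∃ p : DyckWord, p.toList = l.reduceOption}

theorem semilength_le_of_mem_spellings {n : ℕ} {p : DyckWord} {l : List (Option DyckStep)}
    (hl : l ∈ spellings n p.toList) : p.semilength ≤ n / 2 := by
  have hp := p.two_mul_semilength_eq_length
  have := List.reduceOption_length_le l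
  rw [hl.1, hl.2] at this
  omega

/-- A Motzkin word of length `n`, viewed as a Dyck word sorted by its semilength together with a
way of spreading it over `n` places. -/
noncomputable def motzkinWordsEquiv (n : ℕ) :
    (Σ k : Fin (n / 2 + 1), Σ p : {p : DyckWord // p.semilength = k},
      spellings n p.1.toList) ≃ motzkinWords n := by
  refine Equiv.ofBijective (fun x => ⟨x.2.2, x.2.2.2.1, x.2.1, x.2.2.2.2.symm⟩) ⟨?_, ?_⟩
  · rintro ⟨⟨k, hk⟩, ⟨p, hp⟩, ⟨l, hl, hlp⟩⟩ ⟨⟨k', hk'⟩, ⟨p', hp'⟩, ⟨l', hl', hlp'⟩⟩ h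
    obtain rfl : l = l' := congrArg Subtype.val h
    obtain rfl : p = p' := DyckWord.ext (hlp.symm.trans hlp')
    obtain rfl : p.semilength = k := hp
    obtain rfl : p.semilength = k' := hp'
    rfl
  · rintro ⟨l, hl, p, hp⟩
    have hlp : l ∈ spellings n p.toList := ⟨hl, hp.symm⟩
    have hk := Nat.lt_succ_of_le (semilength_le_of_mem_spellings hlp)
    exact ⟨⟨⟨p.semilength, hk⟩, ⟨p, rfl⟩, ⟨l, hlp⟩⟩, rfl⟩

theorem card_motzkinWords (n : ℕ) :
    Nat.card (motzkinWords n) = ∑ k ∈ Finset.range (n / 2 + 1), n.choose (2 * k) * catalan k := by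
  have (d : List DyckStep) : Finite (spellings n d) :=
    finite_of_encard_eq_coe (encard_spellings n d)
  have card_spellings {k : ℕ} (p : {p : DyckWord // p.semilength = k}) :
      Nat.card (spellings n p.1.toList) = n.choose (2 * k) := by
    rw [Nat.card_coe_set_eq, ncard_def, encard_spellings, ENat.toNat_natCast,
      ← p.1.two_mul_semilength_eq_length, p.2]
  have card_fiber (k : ℕ) :
      Nat.card (Σ p : {p : DyckWord // p.semilength = k}, spellings n p.1.toList) =
        n.choose (2 * k) * catalan k := by
    simp_rw [Nat.card_sigma, card_spellings, Finset.sum_const, Finset.card_univ,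
      DyckWord.card_dyckWord_semilength_eq_catalan, smul_eq_mul, mul_comm]
  rw [← Nat.card_congr (motzkinWordsEquiv n), Nat.card_sigma]
  simp_rw [card_fiber]
  exact (Finset.sum_range fun k => n.choose (2 * k) * catalan k).symm

theorem count_reduceOption {β : Type*} [BEq β] (b : β) (l : List (Option β)) :
    l.reduceOption.count b = l.count (some b) :=
  List.count_filterMap

theorem exists_dyckWord_toList_eq_reduceOption_iff (l : List (Option DyckStep)) :
    (∃ p : DyckWord, p.toList = l.reduceOption) ↔
      l.count (some .U) = l.count (some .D) ∧
        ∀ q, q <+: l → q.count (some .D) ≤ q.count (some .U) := by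
  constructor
  · rintro ⟨p, hp⟩
    simp_rw [← count_reduceOption, ← hp]
    refine ⟨p.count_U_eq_count_D, fun q hq => ?_⟩
    have hqp : q.reduceOption <+: p.toList := hp ▸ hq.reduceOption
    rw [List.prefix_iff_eq_take.1 hqp]
    exact p.count_D_le_count_U _
  · rintro ⟨hcount, hprefix⟩
    refine ⟨⟨l.reduceOption, ?_, fun i => ?_⟩, rfl⟩
    · rwa [count_reduceOption, count_reduceOption]
    · obtain ⟨q, hq, hqi⟩ := List.prefix_filterMap_iff.1 (List.take_prefix i l.reduceOption)
      rw [hqi]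
      exact (count_reduceOption _ q).trans_le
        ((hprefix q hq).trans_eq (count_reduceOption _ q).symm)

theorem count_take_ofFn {β : Type*} [BEq β] [LawfulBEq β] [DecidableEq β] (b : β) {n : ℕ}
    (f : Fin n → β) (m : ℕ) : ((List.ofFn f).take m).count b =
      (Finset.univ.filter fun i : Fin n => f i = b ∧ i < m).card := by
  induction n generalizing m with
  | zero => simp
  | succ n ih =>
    cases m with
    | zero => simp
    | succ m =>
      rw [List.ofFn_succ, List.take_succ_cons, List.count_cons, ih, Fin.card_filter_univ_succ']
      simp [add_comm]

theorem ofFn_mem_motzkinWords_iff {n : ℕ} (f : Fin n → Option DyckStep) :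
    List.ofFn f ∈ motzkinWords n ↔
      (Finset.univ.filter (f · = some .U)).card = (Finset.univ.filter (f · = some .D)).card ∧
        ∀ j, (Finset.univ.filter fun i => f i = some .D ∧ i ≤ j).card ≤
          (Finset.univ.filter fun i => f i = some .U ∧ i ≤ j).card := by
  have count_ofFn (s : DyckStep) :
      (List.ofFn f).count (some s) = (Finset.univ.filter (f · = some s)).card := by
    simpa [List.take_of_length_le] using count_take_ofFn (some s) f n
  have count_take (s : DyckStep) (j : Fin n) : ((List.ofFn f).take (j + 1)).count (some s) =
      (Finset.univ.filter fun i => f i = some s ∧ i ≤ j).card := by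
    simp only [count_take_ofFn, Nat.lt_succ_iff, Fin.val_fin_le]
  rw [motzkinWords, mem_ofPred_eq, exists_dyckWord_toList_eq_reduceOption_iff, count_ofFn,
    count_ofFn, and_iff_right (List.length_ofFn)]
  refine and_congr_right fun _ => ⟨fun h j => ?_, fun h q hq => ?_⟩
  · simpa only [count_take] using h _ (List.take_prefix (j + 1) _)
  · have hlen : q.length ≤ n := hq.length_le.trans_eq List.length_ofFn
    rw [List.prefix_iff_eq_take.1 hq]
    cases hm : q.length with
    | zero => simp
    | succ m =>
      have := h ⟨m, by omega⟩
      rwa [← count_take, ← count_take] at this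

end MotzkinWords

section Bijection

variable {α : Type*} [LinearOrder α] {σ : α → α}

open Classical in
/-- The step of the Motzkin word of the involution `σ` at the point `i`: up at an opener, down at a
closer, level at an inner point. -/
noncomputable def motzkinStep (σ : α → α) (i : α) : Option DyckStep :=
  if i ∈ openers σ then some .U else if i ∈ closers σ then some .D else none

theorem motzkinStep_eq_U_iff {i : α} : motzkinStep σ i = some .U ↔ i ∈ openers σ := by
  unfold motzkinStep
  split_ifs <;> simp_all

theorem motzkinStep_eq_D_iff (hσ : Involutive σ) {i : α} :
    motzkinStep σ i = some .D ↔ i ∈ closers σ := by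
  have : i ∈ openers σ → i ∉ closers σ := fun h => disjoint_left.1 (disjoint_openers_closers hσ) h
  unfold motzkinStep
  split_ifs <;> simp_all

theorem HasGreedyInterior.eq_of_motzkinStep_eq [WellFoundedLT α] {τ : α → α} (hσ : Involutive σ)
    (hτ : Involutive τ) (hσ' : HasGreedyInterior σ) (hτ' : HasGreedyInterior τ)
    (h : motzkinStep σ = motzkinStep τ) : σ = τ := by
  refine hσ'.eq_of_openers_eq hσ hτ hτ' (ext fun i => ?_) (ext fun i => ?_)
  · rw [← motzkinStep_eq_U_iff, h, motzkinStep_eq_U_iff]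
  · rw [← motzkinStep_eq_D_iff hσ, h, motzkinStep_eq_D_iff hτ]

variable {n : ℕ}

theorem ofFn_motzkinStep_mem_motzkinWords {σ : Fin n → Fin n} (hσ : Involutive σ) :
    List.ofFn (motzkinStep σ) ∈ motzkinWords n := by
  classical
  simp only [ofFn_mem_motzkinWords_iff, motzkinStep_eq_U_iff, motzkinStep_eq_D_iff hσ]
  refine ⟨Finset.card_nbij' σ σ ?_ ?_ (fun i _ => hσ i) fun i _ => hσ i, fun j => ?_⟩
  · intro i hi
    simpa [apply_mem_closers_iff hσ] using hi
  · intro i hi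
    simpa [apply_mem_openers_iff] using hi
  · refine Finset.card_le_card_of_injOn σ (fun i hi => ?_) hσ.injective.injOn
    simp only [Finset.coe_filter, Finset.mem_univ, true_and, mem_ofPred_eq] at hi ⊢
    obtain ⟨hi, hij⟩ := hi
    have hlt : σ i < i := by simpa only [hσ i] using (apply_mem_openers_iff.2 hi).1
    exact ⟨apply_mem_openers_iff.2 hi, hlt.le.trans hij⟩

theorem exists_motzkinStep_eq {f : Fin n → Option DyckStep} (hf : List.ofFn f ∈ motzkinWords n) :
    ∃ σ : Fin n → Fin n, Involutive σ ∧ HasGreedyInterior σ ∧ motzkinStep σ = f := by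
  obtain ⟨hcard, hballot⟩ := (ofFn_mem_motzkinWords_iff f).1 hf
  have hdisj : Disjoint (Finset.univ.filter (f · = some .U))
      (Finset.univ.filter (f · = some .D)) :=
    Finset.disjoint_filter.2 fun i _ hU hD => by simp [hU] at hD
  obtain ⟨σ, hσ, hgreedy, hO, hC⟩ := exists_involutive_of_ballot hdisj hcard
    (by simpa only [Finset.filter_filter] using hballot)
  refine ⟨σ, hσ, hgreedy, funext fun i => Option.ext fun s => ?_⟩
  cases s with
  | U => exact motzkinStep_eq_U_iff.trans (by simp [hO])
  | D => exact (motzkinStep_eq_D_iff hσ).trans (by simp [hC])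

theorem bijOn_ofFn_motzkinStep (n : ℕ) :
    BijOn (fun π : Equiv.Perm (Fin n) => List.ofFn (motzkinStep π))
      {π | π⁻¹ = π ∧ Avoids π p4231 ∧ Avoids π p5276143} (motzkinWords n) := by
  simp only [inv_eq_and_avoids_iff]
  refine ⟨fun π hπ => ofFn_motzkinStep_mem_motzkinWords hπ.1, fun π hπ ρ hρ h => ?_, ?_⟩
  · exact DFunLike.coe_injective
      (hπ.2.eq_of_motzkinStep_eq hπ.1 hρ.1 hρ.2 (List.ofFn_injective h))
  · intro l hl
    obtain rfl : l.length = n := hl.1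
    obtain ⟨σ, hσ, hgreedy, hstep⟩ := exists_motzkinStep_eq (f := l.get) (by rwa [List.ofFn_get])
    exact ⟨hσ.toPerm, ⟨hσ, hgreedy⟩, by simp only [hσ.coe_toPerm, hstep, List.ofFn_get]⟩

end Bijection

theorem involutions_avoiding_4231_5276143_motzkin (n : ℕ) :
    Nat.card {σ : Equiv.Perm (Fin n) //
        σ⁻¹ = σ ∧ Avoids σ p4231 ∧ Avoids σ p5276143} =
      ∑ k ∈ Finset.range (n / 2 + 1), Nat.choose n (2 * k) * catalan k := by
  rw [← card_motzkinWords]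
  exact Nat.card_congr (bijOn_ofFn_motzkinStep n).equiv
end
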